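/- arXiv:2009.07311 — 6 statements merged into one kernel-verified Lean document; each statement's English description precedes it below -/
import Mathlib

section
/- Let F be a finite field and let A ⊆ F × F be a subset of density μ = |A|/|F|². Then for every real ε > 0, the number of pairs (x, y) ∈ (F × F) × (F × F) such that | |{t ∈ F : x + t·y ∈ A}| − μ·|F| | > ε·|F| is at most (μ/(|F|·ε²))·|F|⁴. (Equivalently: for uniformly random x, y ∈ F², the probability that the fraction of points of the line {x + t·y : t ∈ F} lying in A deviates from μ by more than ε is at most μ/(|F|·ε²).) -/
open scoped Classical

theorem line_aux_offdiag {F : Type*} [Field F] [Fintype F] (g : F × F → ℝ)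
    (hg : ∑ p, g p = 0) (t s : F) (hts : t ≠ s) :
    ∑ x : F × F, ∑ y : F × F, g (x + t • y) * g (x + s • y) = 0 := by
  have hc : s - t ≠ 0 := sub_ne_zero.mpr hts.symm
  rw [Finset.sum_comm]
  have h1 : ∀ y : F × F, ∑ x : F × F, g (x + t • y) * g (x + s • y)
      = ∑ x : F × F, g x * g (x + (s - t) • y) := by
    intro y
    rw [← Equiv.sum_comp (Equiv.addRight (t • y)) (fun x => g x * g (x + (s - t) • y))]
    refine Finset.sum_congr rfl fun x _ => ?_
    simp only [Equiv.coe_addRight]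
    congr 2
    rw [add_assoc, ← add_smul]
    congr 2
    ring
  rw [Finset.sum_congr rfl fun y _ => h1 y, Finset.sum_comm]
  refine Finset.sum_eq_zero fun x _ => ?_
  rw [← Finset.mul_sum]
  have h2 : ∑ y : F × F, g (x + (s - t) • y) = ∑ p, g p := by
    rw [← Equiv.sum_comp ((MulAction.toPerm (Units.mk0 (s - t) hc)).trans (Equiv.addLeft x)) g]
    rfl
  rw [h2, hg, mul_zero]

theorem line_aux_diag {F : Type*} [Field F] [Fintype F] (g : F × F → ℝ) (t : F) :
    ∑ x : F × F, ∑ y : F × F, g (x + t • y) * g (x + t • y)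
      = (Fintype.card F : ℝ) ^ 2 * ∑ p, g p ^ 2 := by
  rw [Finset.sum_comm]
  have h1 : ∀ y : F × F, ∑ x : F × F, g (x + t • y) * g (x + t • y) = ∑ p, g p ^ 2 := by
    intro y
    rw [← Equiv.sum_comp (Equiv.addRight (t • y)) (fun x => g x ^ 2)]
    refine Finset.sum_congr rfl fun x _ => ?_
    simp only [Equiv.coe_addRight]
    ring
  rw [Finset.sum_congr rfl fun y _ => h1 y]
  rw [Finset.sum_const, Finset.card_univ, nsmul_eq_mul, Fintype.card_prod]
  push_cast
  ring

theorem line_aux_second {F : Type*} [Field F] [Fintype F] (g : F × F → ℝ)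
    (hg : ∑ p, g p = 0) :
    ∑ xy : (F × F) × (F × F), (∑ t : F, g (xy.1 + t • xy.2)) ^ 2
      = (Fintype.card F : ℝ) ^ 3 * ∑ p, g p ^ 2 := by
  have h1 : ∑ xy : (F × F) × (F × F), (∑ t : F, g (xy.1 + t • xy.2)) ^ 2
      = ∑ t : F, ∑ s : F, ∑ x : F × F, ∑ y : F × F, g (x + t • y) * g (x + s • y) := by
    simp_rw [sq, Finset.sum_mul_sum]
    rw [Finset.sum_comm]
    refine Finset.sum_congr rfl fun t _ => ?_
    rw [Finset.sum_comm]
    refine Finset.sum_congr rfl fun s _ => ?_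
    rw [Fintype.sum_prod_type]
  rw [h1]
  have h2 : ∀ t : F, ∑ s : F, ∑ x : F × F, ∑ y : F × F, g (x + t • y) * g (x + s • y)
      = (Fintype.card F : ℝ) ^ 2 * ∑ p, g p ^ 2 := by
    intro t
    rw [Finset.sum_eq_single t, line_aux_diag]
    · intro s _ hs
      exact line_aux_offdiag g hg t s hs.symm
    · simp
  rw [Finset.sum_congr rfl fun t _ => h2 t]
  simp
  ring

theorem line_aux_markov {ι : Type*} [Fintype ι] (f : ι → ℝ) (c : ℝ) (hc : 0 ≤ c) :
    ((Finset.univ.filter (fun i => |f i| > c)).card : ℝ) * c ^ 2 ≤ ∑ i, f i ^ 2 := by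
  calc ((Finset.univ.filter (fun i => |f i| > c)).card : ℝ) * c ^ 2
      = ∑ _i ∈ Finset.univ.filter (fun i => |f i| > c), c ^ 2 := by
          rw [Finset.sum_const, nsmul_eq_mul]
    _ ≤ ∑ i ∈ Finset.univ.filter (fun i => |f i| > c), f i ^ 2 := by
          refine Finset.sum_le_sum fun i hi => ?_
          have := (Finset.mem_filter.mp hi).2
          rw [← sq_abs (f i)]
          exact pow_le_pow_left₀ hc this.le 2
    _ ≤ ∑ i, f i ^ 2 :=
          Finset.sum_le_sum_of_subset_of_nonneg (Finset.subset_univ _)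
            fun _ _ _ => sq_nonneg _

/-- **Sampling lemma for lines in the affine plane.**
For a finite field `F` and a subset `A ⊆ F × F` of density `μ`, for every `ε > 0`,
the number of pairs `(x, y)` of points of `F²` such that the number of parameters
`t ∈ F` with `x + t • y ∈ A` deviates from `μ·|F|` by more than `ε·|F|`
is at most `(μ / (|F|·ε²)) · |F|⁴`. -/
theorem line_sampling (F : Type*) [Field F] [Fintype F]
    (A : Finset (F × F)) (μ : ℝ) (hμ : μ = (A.card : ℝ) / (Fintype.card F : ℝ) ^ 2)
    (ε : ℝ) (hε : 0 < ε) :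
    ((Finset.univ.filter (fun xy : (F × F) × (F × F) =>
        |((Finset.univ.filter (fun t : F => xy.1 + t • xy.2 ∈ A)).card : ℝ)
            - μ * (Fintype.card F : ℝ)| > ε * (Fintype.card F : ℝ))).card : ℝ)
      ≤ (μ / ((Fintype.card F : ℝ) * ε ^ 2)) * (Fintype.card F : ℝ) ^ 4 := by
  set q : ℝ := (Fintype.card F : ℝ) with hq
  have hq0 : 0 < q := by
    rw [hq]; exact_mod_cast Fintype.card_pos
  have hA : (A.card : ℝ) = μ * q ^ 2 := by
    rw [hμ]; field_simp
  have hμ0 : 0 ≤ μ := by rw [hμ]; positivity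
  have hcard : ((Fintype.card (F × F) : ℕ) : ℝ) = q ^ 2 := by
    rw [Fintype.card_prod]; push_cast; ring
  have hind : ∑ p : F × F, (if p ∈ A then (1 : ℝ) else 0) = μ * q ^ 2 := by
    rw [← hA]; simp
  have hg : ∑ p : F × F, ((if p ∈ A then (1 : ℝ) else 0) - μ) = 0 := by
    rw [Finset.sum_sub_distrib, hind, Finset.sum_const, Finset.card_univ, nsmul_eq_mul, hcard]
    ring
  have hg2 : ∑ p : F × F, ((if p ∈ A then (1 : ℝ) else 0) - μ) ^ 2 ≤ μ * q ^ 2 := by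
    have h : ∀ p : F × F, ((if p ∈ A then (1 : ℝ) else 0) - μ) ^ 2
        = (1 - 2 * μ) * (if p ∈ A then (1 : ℝ) else 0) + μ ^ 2 := by
      intro p; split_ifs <;> ring
    rw [Finset.sum_congr rfl fun p _ => h p, Finset.sum_add_distrib, ← Finset.mul_sum, hind,
      Finset.sum_const, Finset.card_univ, nsmul_eq_mul, hcard]
    nlinarith [sq_nonneg (μ * q)]
  have hsec := line_aux_second (fun p : F × F => (if p ∈ A then (1 : ℝ) else 0) - μ) hg
  have hdev : ∀ xy : (F × F) × (F × F),
      ∑ t : F, ((if xy.1 + t • xy.2 ∈ A then (1 : ℝ) else 0) - μ)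
        = ((Finset.univ.filter (fun t : F => xy.1 + t • xy.2 ∈ A)).card : ℝ) - μ * q := by
    intro xy
    rw [Finset.sum_sub_distrib, Finset.sum_boole, Finset.sum_const, Finset.card_univ,
      nsmul_eq_mul]
    ring
  simp only [hdev] at hsec
  have hmarkov := (line_aux_markov (fun xy : (F × F) × (F × F) =>
    ((Finset.univ.filter (fun t : F => xy.1 + t • xy.2 ∈ A)).card : ℝ) - μ * q)
    (ε * q) (by positivity)).trans
    (hsec.le.trans (mul_le_mul_of_nonneg_left hg2 (by positivity)))
  have hfin : μ / (q * ε ^ 2) * q ^ 4 = q ^ 3 * (μ * q ^ 2) / (ε * q) ^ 2 := by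
    field_simp
  rw [hfin, le_div_iff₀ (by positivity)]
  exact hmarkov
end

section
/- Let K be a finite field with q = |K|, let m ≥ 1, and let A be any set of m × m matrices over K with |A| = α·q^{m²}. Then the number of pairs (H, T) of m × m matrices over K such that the product H·T lies in A is at most (α + 2/q)·q^{2m²}. (Equivalently: for uniformly random and independent matrices H and T, Pr[H·T ∈ A] ≤ α + 2/q.) -/
open scoped Classical

lemma prod_aux (q Q : ℝ) (hq : 2 ≤ q) (hQ : 0 < Q) (k : ℕ) (hk : q ^ k ≤ q * Q) :
    1 - 2 / q * (q ^ k / Q) ≤ ∏ i ∈ Finset.range k, (1 - q ^ i / Q) ∧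
      0 ≤ ∏ i ∈ Finset.range k, (1 - q ^ i / Q) ∧
      ∏ i ∈ Finset.range k, (1 - q ^ i / Q) ≤ 1 := by
  have hq0 : 0 < q := by linarith
  induction k with
  | zero =>
    simp
    positivity
  | succ k ih =>
    have hle : q ^ k ≤ Q := by
      rw [pow_succ, mul_comm] at hk
      exact le_of_mul_le_mul_left hk hq0
    obtain ⟨h1, h2, h3⟩ := ih (by nlinarith)
    rw [Finset.prod_range_succ]
    have hx1 : q ^ k / Q ≤ 1 := (div_le_one hQ).2 hle
    have hx0 : 0 ≤ q ^ k / Q := by positivity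
    have e : 2 / q * (q ^ (k + 1) / Q) = 2 * (q ^ k / Q) := by
      rw [pow_succ]; field_simp
    have h2q : 2 / q ≤ 1 := (div_le_one hq0).2 hq
    rw [e]
    generalize q ^ k / Q = x at *
    generalize ∏ i ∈ Finset.range k, (1 - q ^ i / Q) = P at *
    refine ⟨?_, mul_nonneg h2 (by linarith), ?_⟩ <;> nlinarith

lemma card_GL_lower (K : Type*) [Field K] [Fintype K] (m : ℕ) :
    (1 - 2 / (Fintype.card K : ℝ)) * (Fintype.card K : ℝ) ^ (m ^ 2) ≤
      (Nat.card (Matrix.GeneralLinearGroup (Fin m) K) : ℝ) := by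
  rw [Matrix.card_GL_field]
  have hq : (2 : ℝ) ≤ (Fintype.card K : ℝ) := by
    exact_mod_cast Fintype.one_lt_card (α := K)
  have hqn : 1 ≤ Fintype.card K := Fintype.card_pos
  generalize Fintype.card K = q at *
  have hQ : (0 : ℝ) < (q : ℝ) ^ m := by positivity
  have h := (prod_aux q ((q : ℝ) ^ m) hq hQ m (by nlinarith)).1
  rw [div_self hQ.ne', mul_one] at h
  have e : ((∏ i : Fin m, (q ^ m - q ^ (i : ℕ)) : ℕ) : ℝ)
      = (∏ i ∈ Finset.range m, (1 - (q : ℝ) ^ i / (q : ℝ) ^ m)) * (q : ℝ) ^ (m ^ 2) := by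
    rw [Nat.cast_prod, ← Fin.prod_univ_eq_prod_range (fun i => 1 - (q : ℝ) ^ i / (q : ℝ) ^ m)]
    have : (q : ℝ) ^ (m ^ 2) = ∏ i : Fin m, (q : ℝ) ^ m := by
      simp [← pow_mul, sq]
    rw [this, ← Finset.prod_mul_distrib]
    refine Finset.prod_congr rfl fun i _ => ?_
    rw [Nat.cast_sub (Nat.pow_le_pow_right hqn i.2.le)]
    push_cast
    field_simp
  rw [e]
  gcongr

theorem matrix_product_almost_uniform (K : Type*) [Field K] [Fintype K] [DecidableEq K]
    (m : ℕ) (hm : 1 ≤ m) (A : Finset (Matrix (Fin m) (Fin m) K)) (α : ℝ)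
    (hα : (A.card : ℝ) = α * (Fintype.card K : ℝ) ^ (m ^ 2)) :
    ((Finset.univ.filter (fun HT : Matrix (Fin m) (Fin m) K × Matrix (Fin m) (Fin m) K =>
        HT.1 * HT.2 ∈ A)).card : ℝ)
      ≤ (α + 2 / (Fintype.card K : ℝ)) * (Fintype.card K : ℝ) ^ (2 * m ^ 2) := by
  have hGL := card_GL_lower K m
  set N : Finset (Matrix (Fin m) (Fin m) K) := Finset.univ.filter IsUnit with hN
  set S : Finset (Matrix (Fin m) (Fin m) K) := Finset.univ.filter (fun H => ¬ IsUnit H) with hS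
  have hNc : Nat.card (Matrix.GeneralLinearGroup (Fin m) K) = N.card := by
    have hc : Nat.card {x // x ∈ N} = N.card := by
      rw [Nat.card_eq_fintype_card, Fintype.card_coe]
    rw [← hc]
    refine Nat.card_congr (Equiv.ofBijective (fun u => ⟨u.1, by simp [hN]⟩) ⟨?_, ?_⟩)
    · intro u v h
      exact Units.ext (congrArg Subtype.val h)
    · rintro ⟨H, hH⟩
      have hu : IsUnit H := by simpa [hN] using hH
      exact ⟨hu.unit, rfl⟩
  have hcard : Fintype.card (Matrix (Fin m) (Fin m) K) = Fintype.card K ^ (m ^ 2) := by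
    rw [← Nat.card_eq_fintype_card]
    simp [Matrix, ← pow_mul, sq]
  have hNS : N.card + S.card = Fintype.card K ^ (m ^ 2) := by
    rw [← hcard, ← Finset.card_univ]
    exact Finset.card_filter_add_card_filter_not _
  have hNS' : (N.card : ℝ) + S.card = (Fintype.card K : ℝ) ^ (m ^ 2) := by exact_mod_cast hNS
  have hsub : (Finset.univ.filter (fun HT : Matrix (Fin m) (Fin m) K × Matrix (Fin m) (Fin m) K =>
        HT.1 * HT.2 ∈ A)).card ≤ N.card * A.card + S.card * Fintype.card K ^ (m ^ 2) := by
    rw [← hcard, ← Finset.card_univ, ← Finset.card_product, ← Finset.card_product,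
      ← Finset.card_filter_add_card_filter_not (fun HT => IsUnit HT.1)]
    refine add_le_add ?_ ?_
    · refine Finset.card_le_card_of_injOn (fun HT => (HT.1, HT.1 * HT.2)) ?_ ?_
      · intro HT h
        simp at h
        simp [hN, h]
      · rintro ⟨H, T⟩ h ⟨H', T'⟩ h' e
        simp at h h' e
        obtain ⟨rfl, e⟩ := e
        simp [h.2.mul_left_cancel e]
    · refine Finset.card_le_card ?_
      intro HT h
      simp at h
      simp [hS, h]
  have hsub' : ((Finset.univ.filter (fun HT : Matrix (Fin m) (Fin m) K × Matrix (Fin m) (Fin m) K =>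
        HT.1 * HT.2 ∈ A)).card : ℝ) ≤ N.card * A.card + S.card * (Fintype.card K : ℝ) ^ (m ^ 2) := by
    exact_mod_cast hsub
  refine hsub'.trans ?_
  rw [hNc] at hGL
  clear hsub' hsub hNS hcard hNc
  clear_value N S
  have hA : (0 : ℝ) ≤ A.card := Nat.cast_nonneg _
  have hSn : (0 : ℝ) ≤ S.card := Nat.cast_nonneg _
  have hQ : (0 : ℝ) ≤ (Fintype.card K : ℝ) ^ (m ^ 2) := by positivity
  rw [mul_comm 2 (m ^ 2), pow_mul]
  generalize (Fintype.card K : ℝ) ^ (m ^ 2) = Q at *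
  have h1 : (N.card : ℝ) * A.card ≤ Q * A.card := by gcongr; linarith
  have h2 : (S.card : ℝ) * Q ≤ (2 / (Fintype.card K : ℝ) * Q) * Q := by gcongr; linarith
  rw [hα] at h1
  rw [hα]
  nlinarith
end

section
/- Let m ≥ 1, let H be a finite field, and let F be a field extension of H of degree exactly m (i.e., F is an H-vector space of dimension m). Let A ⊆ (Fin m → F) be a set of size |A| = α·|F|^m. Then the number of tuples (h₁, …, h_m, t₁, …, t_m) with each hᵢ ∈ H^m and each tᵢ ∈ F such that the vector ∑_{i=1}^m tᵢ • ι(hᵢ) lies in A is at most (α + 2/|H|)·|H|^{m²}·|F|^m, where ι : H^m → F^m applies the field inclusion H ↪ F componentwise and tᵢ • v multiplies each component of v ∈ F^m by tᵢ ∈ F. (Equivalently: for h₁,…,h_m ∈ H^m and t₁,…,t_m ∈ F chosen uniformly and independently, Pr[∑ᵢ tᵢ • ι(hᵢ) ∈ A] ≤ α + 2/|H|.) -/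
open scoped Classical

theorem mix_prod_bound (x : ℝ) (hx0 : 0 ≤ x) (hx : x ≤ 1 / 2) (k : ℕ) :
    0 ≤ ∏ j ∈ Finset.range k, (1 - x ^ (j + 1)) ∧
    ∏ j ∈ Finset.range k, (1 - x ^ (j + 1)) ≤ 1 ∧
    1 - 2 * x + 2 * x ^ (k + 1) ≤ ∏ j ∈ Finset.range k, (1 - x ^ (j + 1)) := by
  induction k with
  | zero => simp
  | succ k ih =>
    obtain ⟨h0, h1, h2⟩ := ih
    have hp : 0 ≤ x ^ (k + 1) := by positivity
    have hp1 : x ^ (k + 1) ≤ 1 := pow_le_one₀ hx0 (by linarith)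
    rw [Finset.prod_range_succ]
    refine ⟨mul_nonneg h0 (by linarith), by nlinarith, ?_⟩
    have : x ^ (k + 1 + 1) = x ^ (k + 1) * x := pow_succ _ _
    nlinarith

theorem mix_GL_bound (H : Type*) [Field H] [Fintype H] (m : ℕ) :
    (1 - 2 / (Fintype.card H : ℝ)) * (Fintype.card H : ℝ) ^ (m ^ 2)
      ≤ (Nat.card (GL (Fin m) H) : ℝ) := by
  have hq : 2 ≤ Fintype.card H := Fintype.one_lt_card
  have hqr : (2 : ℝ) ≤ Fintype.card H := by exact_mod_cast hq
  have hpos : (0 : ℝ) < Fintype.card H := by linarith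
  have key : (Nat.card (GL (Fin m) H) : ℝ) = (Fintype.card H : ℝ) ^ (m ^ 2) *
      ∏ j ∈ Finset.range m, (1 - ((Fintype.card H : ℝ)⁻¹) ^ (j + 1)) := by
    rw [Matrix.card_GL_field, Fin.prod_univ_eq_prod_range
      (fun i => Fintype.card H ^ m - Fintype.card H ^ i) m, ← Finset.prod_range_reflect,
      sq, pow_mul]
    have : ∀ a : ℝ, a ^ m = ∏ j ∈ Finset.range m, a := by simp
    rw [this (_ ^ m), ← Finset.prod_mul_distrib]
    push_cast
    refine Finset.prod_congr rfl fun j hj => ?_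
    have hj' := Finset.mem_range.mp hj
    rw [Nat.cast_sub (Nat.pow_le_pow_right (by omega) (by omega))]
    push_cast
    have e : (Fintype.card H : ℝ) ^ m
        = (Fintype.card H : ℝ) ^ (m - 1 - j) * (Fintype.card H : ℝ) ^ (j + 1) := by
      rw [← pow_add]; congr 1; omega
    rw [e, inv_pow]
    field_simp
  rw [key, mul_comm]
  have hx : ((Fintype.card H : ℝ)⁻¹) ≤ 1 / 2 := by
    rw [one_div]; exact inv_anti₀ (by norm_num) hqr
  have hb := (mix_prod_bound _ (by positivity) hx m).2.2
  refine mul_le_mul_of_nonneg_left (le_trans ?_ hb) (by positivity)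
  have : 0 ≤ ((Fintype.card H : ℝ)⁻¹) ^ (m + 1) := by positivity
  rw [div_eq_mul_inv]
  linarith

theorem mix_sing_bound (H : Type*) [Field H] [Fintype H] (m : ℕ) :
    ((Finset.univ.filter (fun h : Fin m → Fin m → H =>
      ¬ IsUnit (Matrix.of h))).card : ℝ)
      ≤ 2 / (Fintype.card H : ℝ) * (Fintype.card H : ℝ) ^ (m ^ 2) := by
  have h1 := Finset.card_filter_add_card_filter_not (s := Finset.univ)
    (fun h : Fin m → Fin m → H => IsUnit (Matrix.of h))
  have h2 : Nat.card (GL (Fin m) H) ≤ (Finset.univ.filter (fun h : Fin m → Fin m → H =>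
      IsUnit (Matrix.of h))).card := by
    rw [Nat.card_eq_fintype_card, ← Finset.card_univ]
    refine Finset.card_le_card_of_injOn (fun g => (g : Matrix (Fin m) (Fin m) H)) ?_ ?_
    · intro g _
      have : IsUnit (g : Matrix (Fin m) (Fin m) H) := g.isUnit
      exact Finset.mem_coe.mpr (Finset.mem_filter.mpr ⟨Finset.mem_univ _, this⟩)
    · intro a _ b _ hab
      exact Units.ext hab
  have h3 : (Finset.univ : Finset (Fin m → Fin m → H)).card = Fintype.card H ^ (m ^ 2) := by
    simp [sq, pow_mul]
  have h4 := mix_GL_bound H m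
  rw [h3] at h1
  have h1r : (_ : ℝ) = _ := congrArg (Nat.cast : ℕ → ℝ) h1
  have h2r : (_ : ℝ) ≤ _ := Nat.cast_le (α := ℝ).mpr h2
  push_cast at h1r
  linarith

/-- **Key mixing claim (Claim 3.4).**
Let `H` be a finite field and `F` an extension of `H` of degree `m ≥ 1`.
For any set `A ⊆ F^m` of size `α · |F|^m`, the number of tuples
`(h₁, …, h_m, t₁, …, t_m)` with `hᵢ ∈ H^m`, `tᵢ ∈ F` such that
`∑ᵢ tᵢ • ι(hᵢ) ∈ A` is at most `(α + 2/|H|) · |H|^(m²) · |F|^m`,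
where `ι` applies the field inclusion `H ↪ F` componentwise. -/
theorem mixing_key_claim (H F : Type*) [Field H] [Fintype H] [Field F] [Fintype F]
    [Algebra H F] (m : ℕ) (hm : 1 ≤ m) (hrank : Module.finrank H F = m)
    (A : Finset (Fin m → F)) (α : ℝ)
    (hα : (A.card : ℝ) = α * (Fintype.card F : ℝ) ^ m) :
    ((Finset.univ.filter (fun ht : (Fin m → (Fin m → H)) × (Fin m → F) =>
        (∑ i : Fin m, ht.2 i • fun j => algebraMap H F (ht.1 i j)) ∈ A)).card : ℝ)
      ≤ (α + 2 / (Fintype.card H : ℝ))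
          * (Fintype.card H : ℝ) ^ (m ^ 2) * (Fintype.card F : ℝ) ^ m := by
  have hcard : (Finset.univ : Finset (Fin m → Fin m → H)).card = Fintype.card H ^ (m ^ 2) := by
    simp [sq, pow_mul]
  have hunit : ∀ h : Fin m → Fin m → H, IsUnit (Matrix.of h) →
      (Finset.univ.filter (fun t : Fin m → F =>
        (∑ i : Fin m, t i • fun j => algebraMap H F (h i j)) ∈ A)).card ≤ A.card := by
    intro h hu
    have hu' : IsUnit ((Matrix.of h).map (algebraMap H F)) :=
      hu.map (algebraMap H F).mapMatrix
    have hinj := Matrix.vecMul_injective_of_isUnit hu'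
    refine Finset.card_le_card_of_injOn
      (fun t => ∑ i : Fin m, t i • fun j => algebraMap H F (h i j)) ?_ ?_
    · intro t ht
      simpa using ht
    · intro a _ b _ hab
      apply hinj
      have e : ∀ t : Fin m → F, Matrix.vecMul t ((Matrix.of h).map (algebraMap H F))
          = ∑ i : Fin m, t i • fun j => algebraMap H F (h i j) := by
        intro t
        ext j
        simp [Matrix.vecMul, dotProduct, Finset.sum_apply]
      simp only [e]
      exact hab
  have hsum : (Finset.univ.filter (fun ht : (Fin m → (Fin m → H)) × (Fin m → F) =>
        (∑ i : Fin m, ht.2 i • fun j => algebraMap H F (ht.1 i j)) ∈ A)).card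
      = ∑ h : Fin m → Fin m → H, (Finset.univ.filter (fun t : Fin m → F =>
        (∑ i : Fin m, t i • fun j => algebraMap H F (h i j)) ∈ A)).card := by
    simp only [Finset.card_filter]
    rw [Fintype.sum_prod_type]
  have hle : (Finset.univ.filter (fun ht : (Fin m → (Fin m → H)) × (Fin m → F) =>
        (∑ i : Fin m, ht.2 i • fun j => algebraMap H F (ht.1 i j)) ∈ A)).card
      ≤ Fintype.card H ^ (m ^ 2) * A.card + (Finset.univ.filter
        (fun h : Fin m → Fin m → H => ¬ IsUnit (Matrix.of h))).card * Fintype.card F ^ m := by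
    rw [hsum]
    calc _ ≤ ∑ h : Fin m → Fin m → H, (A.card +
          (if ¬ IsUnit (Matrix.of h) then 1 else 0) * Fintype.card F ^ m) := by
          refine Finset.sum_le_sum fun h _ => ?_
          by_cases hu : IsUnit (Matrix.of h)
          · exact (hunit h hu).trans (Nat.le_add_right _ _)
          · rw [if_pos hu, one_mul]
            refine le_trans ?_ (Nat.le_add_left _ _)
            refine (Finset.card_filter_le _ _).trans ?_
            simp
      _ = _ := by
          rw [Finset.sum_add_distrib, Finset.sum_const, hcard, ← Finset.sum_mul,
            Finset.card_filter, smul_eq_mul]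
  have hler : (_ : ℝ) ≤ _ := Nat.cast_le (α := ℝ).mpr hle
  push_cast at hler
  rw [hα] at hler
  refine hler.trans ?_
  have := mul_le_mul_of_nonneg_right (mix_sing_bound H m)
    (by positivity : (0 : ℝ) ≤ (Fintype.card F : ℝ) ^ m)
  linarith
end

section
/- Let m ≥ 1, let H be a finite field, and let F be a field extension of H of degree m. Let f : F^m → F be a function that is nonzero on at most τ·|F|^m inputs (i.e., f is τ-close to the all-zeros function). Fix any starting point x₀ ∈ F^m and any h₀ ∈ H^m. Consider the random process that samples, uniformly and independently, vectors h'₀, h'₁, …, h'_m ∈ H^m and field elements s₀, …, s_m ∈ F, s'₀, …, s'_m ∈ F, t₀, …, t_{m−1} ∈ F, t'₀, …, t'_{m−1} ∈ F, and defines recursively (in F^m, applying the inclusion ι : H^m → F^m componentwise): ĥ₀ = ι(h₀); for 1 ≤ i ≤ m, ĥ_i = t_{i−1} • ĥ_{i−1} + t'_{i−1} • ι(h'_{i−1}) and x_i = x_{i−1} + s_{i−1} • ĥ_{i−1} + s'_{i−1} • ι(h'_{i−1}); and finally z = x_m + s_m • ĥ_m + s'_m • ι(h'_m). Then the probability (i.e.,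 the fraction of tuples in the finite sample space (H^m)^{m+1} × F^{4m+2}) that f(z) ≠ 0 is at most τ + 2/|H|. -/
open scoped Classical

noncomputable section

/-- Componentwise application of the field inclusion `H ↪ F` to a vector. -/
def iotaV {H F : Type*} [CommSemiring H] [CommSemiring F] [Algebra H F] {m : ℕ}
    (v : Fin m → H) : Fin m → F :=
  fun j => algebraMap H F (v j)

/-- Extend a `Fin n`-indexed family to a `ℕ`-indexed family by zero. -/
def pad {β : Type*} [Zero β] {n : ℕ} (f : Fin n → β) : ℕ → β :=
  fun i => if h : i < n then f ⟨i, h⟩ else 0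

/-- The direction vectors `ĥ_i` of the plane-line random walk:
`ĥ₀ = ι(h₀)` and `ĥ_{i+1} = t_i • ĥ_i + t'_i • ι(h'_i)`. -/
def walkH {H F : Type*} [CommSemiring H] [Field F] [Algebra H F] {m : ℕ}
    (h0 : Fin m → H) (h' : ℕ → Fin m → H) (t t' : ℕ → F) : ℕ → (Fin m → F)
  | 0 => iotaV h0
  | (i + 1) => t i • walkH h0 h' t t' i + t' i • iotaV (h' i)

/-- The base points `x_i` of the plane-line random walk:
`x_{i+1} = x_i + s_i • ĥ_i + s'_i • ι(h'_i)`. -/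
def walkX {H F : Type*} [CommSemiring H] [Field F] [Algebra H F] {m : ℕ}
    (x0 : Fin m → F) (h0 : Fin m → H) (h' : ℕ → Fin m → H) (s s' t t' : ℕ → F) :
    ℕ → (Fin m → F)
  | 0 => x0
  | (i + 1) => walkX x0 h0 h' s s' t t' i + s i • walkH h0 h' t t' i + s' i • iotaV (h' i)

/-- Translated preimages under a surjective homomorphism have proportional size. -/
theorem card_preimage_aux {A B : Type*} [AddGroup A] [AddGroup B] [Fintype A] [Fintype B]
    (g : A →+ B) (hg : Function.Surjective g) (c : B) (P : B → Prop) [DecidablePred P] :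
    (Finset.univ.filter (fun a => P (c + g a))).card * Fintype.card B
      = (Finset.univ.filter P).card * Fintype.card A := by
  have hfib : ∀ b : B, (Finset.univ.filter (fun a => g a = b)).card
      = (Finset.univ.filter (fun a => g a = 0)).card := fun b =>
    AddMonoidHom.card_fiber_eq_of_mem_range g (hg b) (hg 0)
  have hA : Fintype.card A = Fintype.card B * (Finset.univ.filter (fun a => g a = 0)).card := by
    rw [← Finset.card_univ, Finset.card_eq_sum_card_fiberwise (f := g) (t := Finset.univ)
      (fun _ _ => by simp)]
    simp [hfib]
  have hP : (Finset.univ.filter (fun a => P (c + g a))).card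
      = (Finset.univ.filter P).card * (Finset.univ.filter (fun a => g a = 0)).card := by
    rw [Finset.card_eq_sum_card_fiberwise (f := fun a => c + g a) (t := Finset.univ.filter P)
      (fun a ha => by simpa using ha)]
    rw [Finset.sum_const_nat]
    intro b hb
    rw [← hfib (-c + b)]
    congr 1
    ext a
    simp only [Finset.mem_filter, Finset.mem_univ, true_and] at hb ⊢
    constructor
    · rintro ⟨_, h⟩
      rw [← h]; simp
    · intro h
      rw [h]; simpa using hb
  rw [hP, hA]; ring

/-- The walk is affine in `s'`. -/
theorem walkX_affine {H F : Type*} [CommSemiring H] [Field F] [Algebra H F] {m : ℕ}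
    (x0 : Fin m → F) (h0 : Fin m → H) (h' : ℕ → Fin m → H) (s s' t t' : ℕ → F) (n : ℕ) :
    walkX x0 h0 h' s s' t t' n
      = walkX x0 h0 h' s 0 t t' n + ∑ i ∈ Finset.range n, s' i • (iotaV (h' i) : Fin m → F) := by
  induction n with
  | zero => simp [walkX]
  | succ n ih =>
    rw [Finset.sum_range_succ, walkX, walkX, ih]
    simp only [Pi.zero_apply, zero_smul]
    abel

/-- The linear combination map. -/
def combMap {H F : Type*} [CommSemiring H] [Field F] [Algebra H F] {m n : ℕ}
    (h : Fin n → Fin m → H) : (Fin n → F) →+ (Fin m → F) where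
  toFun a := ∑ i, a i • (iotaV (h i) : Fin m → F)
  map_zero' := by simp
  map_add' a b := by simp [add_smul, Finset.sum_add_distrib]

theorem combMap_surj {H F : Type*} [Field H] [Field F] [Algebra H F] {m n : ℕ}
    (h : Fin n → Fin m → H) (hs : Submodule.span H (Set.range h) = ⊤) :
    Function.Surjective (combMap (F := F) h) := by
  intro y
  have key : ∀ j : Fin m, ∃ c : Fin n → H, ∑ i, c i • h i = Pi.single j 1 := fun j => by
    have : (Pi.single j 1 : Fin m → H) ∈ Submodule.span H (Set.range h) := by rw [hs]; trivial
    exact (Submodule.mem_span_range_iff_exists_fun H).1 this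
  choose c hc using key
  refine ⟨fun i => ∑ j, y j * algebraMap H F (c j i), ?_⟩
  ext k
  have hk : ∀ j, ∑ i, algebraMap H F (c j i) * algebraMap H F (h i k)
      = if k = j then 1 else 0 := fun j => by
    have := congrArg (algebraMap H F) (congrFun (hc j) k)
    simp only [Finset.sum_apply, Pi.smul_apply, smul_eq_mul, map_sum, map_mul] at this
    rw [this, Pi.single_apply]
    split_ifs <;> simp
  simp only [combMap, AddMonoidHom.coe_mk, ZeroHom.coe_mk, Finset.sum_apply, Pi.smul_apply,
    smul_eq_mul, iotaV, Finset.sum_mul]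
  rw [Finset.sum_comm]
  simp_rw [mul_assoc, ← Finset.mul_sum, hk]
  simp

/-- Few tuples fail to span. -/
theorem bad_card {H : Type*} [Field H] [Fintype H] (m : ℕ) :
    (Finset.univ.filter (fun h : Fin (m + 1) → Fin m → H =>
      Submodule.span H (Set.range h) ≠ ⊤)).card * Fintype.card H
      ≤ Fintype.card H ^ (m * (m + 1)) := by
  set q := Fintype.card H with hq
  have hq0 : 0 < q := Fintype.card_pos
  have hker : ∀ φ : (Fin m → H) →ₗ[H] H, φ ≠ 0 →
      (Finset.univ.filter (fun x => φ x = 0)).card * q = q ^ m := fun φ hφ => by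
    have := card_preimage_aux φ.toAddMonoidHom (LinearMap.surjective hφ) 0 (fun b => b = 0)
    have h1 : (Finset.univ.filter (fun b : H => b = 0)).card = 1 :=
      Finset.card_eq_one.2 ⟨0, by ext; simp⟩
    rw [h1] at this
    simpa using this
  let L : (Fin m → H) → ((Fin m → H) →ₗ[H] H) := fun v => Fintype.linearCombination H v
  have hsub : (Finset.univ.filter (fun h : Fin (m + 1) → Fin m → H =>
      Submodule.span H (Set.range h) ≠ ⊤)) ⊆
      (Finset.univ.filter (fun v => L v ≠ 0)).biUnion (fun v =>
        Fintype.piFinset (fun _ : Fin (m + 1) => Finset.univ.filter (fun x => L v x = 0))) := by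
    intro h hh
    simp only [Finset.mem_filter, Finset.mem_univ, true_and] at hh
    obtain ⟨φ, hφ, hle⟩ := Submodule.exists_le_ker_of_lt_top _ (lt_top_iff_ne_top.2 hh)
    have hL : L (fun j => φ (Pi.single j 1)) = φ := by
      ext j
      simp [L, Fintype.linearCombination_apply, Pi.single_apply]
    simp only [Finset.mem_biUnion, Finset.mem_filter, Finset.mem_univ, true_and,
      Fintype.mem_piFinset]
    refine ⟨fun j => φ (Pi.single j 1), by rwa [hL], fun i => ?_⟩
    rw [hL]
    exact hle (Submodule.subset_span ⟨i, rfl⟩)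
  have h1 := (Finset.card_le_card hsub).trans Finset.card_biUnion_le
  have h2 : ∀ v ∈ Finset.univ.filter (fun v => L v ≠ 0),
      (Fintype.piFinset (fun _ : Fin (m + 1) =>
        Finset.univ.filter (fun x => L v x = 0))).card * q ^ (m + 1) ≤ q ^ (m * (m + 1)) := by
    intro v hv
    rw [Fintype.card_piFinset_const, ← mul_pow, hker _ (by simpa using hv), ← pow_mul]
  have h3 := Nat.mul_le_mul_right (q ^ (m + 1)) h1
  rw [Finset.sum_mul] at h3
  have h4 := h3.trans (Finset.sum_le_card_nsmul _ _ _ h2)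
  have h5 : (Finset.univ.filter (fun v => L v ≠ 0)).card ≤ q ^ m := by
    refine (Finset.card_le_univ _).trans ?_
    simp [hq]
  have h6 := h4.trans (Nat.mul_le_mul_right _ h5)
  refine Nat.le_of_mul_le_mul_left ?_ (pow_pos hq0 m)
  calc _ = _ := ?_
    _ ≤ _ := h6
  rw [pow_succ]; ring

/-- **Lemma 4.4 (`random z` in the final plane).**
Let `H` be a finite field, `F` an extension of degree `m ≥ 1`, and `f : F^m → F`
nonzero on at most `τ·|F|^m` points.  Fix `x₀ ∈ F^m` and `h₀ ∈ H^m`.  Sampling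
`h'₀, …, h'_m ∈ H^m`, `s₀, …, s_m, s'₀, …, s'_m ∈ F` and `t₀, …, t_{m−1}, t'₀, …, t'_{m−1} ∈ F`
uniformly and independently and running the plane-line walk, the final point
`z = x_m + s_m • ĥ_m + s'_m • ι(h'_m)` (which is `walkX … (m+1)`) satisfies `f(z) ≠ 0`
with probability at most `τ + 2/|H|` over the sample space `(H^m)^{m+1} × F^{4m+2}`. -/
theorem final_point_almost_uniform (H F : Type*) [Field H] [Fintype H] [Field F] [Fintype F]
    [Algebra H F] (m : ℕ) (hm : 1 ≤ m) (hrank : Module.finrank H F = m)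
    (f : (Fin m → F) → F) (τ : ℝ)
    (hf : ((Finset.univ.filter (fun y : Fin m → F => f y ≠ 0)).card : ℝ)
            ≤ τ * (Fintype.card F : ℝ) ^ m)
    (x0 : Fin m → F) (h0 : Fin m → H) :
    ((Finset.univ.filter
        (fun ω : (Fin (m + 1) → (Fin m → H))
                  × (Fin (m + 1) → F) × (Fin (m + 1) → F) × (Fin m → F) × (Fin m → F) =>
          f (walkX x0 h0 (pad ω.1) (pad ω.2.1) (pad ω.2.2.1) (pad ω.2.2.2.1)
              (pad ω.2.2.2.2) (m + 1)) ≠ 0)).card : ℝ)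
      / ((Fintype.card H : ℝ) ^ (m * (m + 1)) * (Fintype.card F : ℝ) ^ (4 * m + 2))
    ≤ τ + 2 / (Fintype.card H : ℝ) := by
  set q := Fintype.card H with hq
  set Q := Fintype.card F with hQ
  have hq0 : (0 : ℝ) < q := by exact_mod_cast (Fintype.card_pos : 0 < Fintype.card H)
  have hQ0 : (0 : ℝ) < Q := by exact_mod_cast (Fintype.card_pos : 0 < Fintype.card F)
  have hτ : 0 ≤ τ := by
    by_contra hneg
    push Not at hneg
    have h1 : τ * (Q : ℝ) ^ m < 0 := mul_neg_of_neg_of_pos hneg (by positivity)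
    have h2 := Nat.cast_nonneg (α := ℝ) (Finset.univ.filter (fun y : Fin m → F => f y ≠ 0)).card
    linarith
  have hN : ∀ (h : Fin (m + 1) → (Fin m → H)) (s : Fin (m + 1) → F) (t t' : Fin m → F),
      ((Finset.univ.filter (fun s' : Fin (m + 1) → F =>
        f (walkX x0 h0 (pad h) (pad s) (pad s') (pad t) (pad t') (m + 1)) ≠ 0)).card : ℝ)
      ≤ (τ + if Submodule.span H (Set.range h) ≠ ⊤ then 1 else 0) * (Q : ℝ) ^ (m + 1) := by
    intro h s t t'
    by_cases hs : Submodule.span H (Set.range h) = ⊤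
    · have hz : ∀ s' : Fin (m + 1) → F,
          walkX x0 h0 (pad h) (pad s) (pad s') (pad t) (pad t') (m + 1)
          = walkX x0 h0 (pad h) (pad s) 0 (pad t) (pad t') (m + 1) + combMap h s' := fun s' => by
        rw [walkX_affine, Finset.sum_range]
        congr 1
        simp only [combMap, pad, AddMonoidHom.coe_mk, ZeroHom.coe_mk, Fin.is_lt, dite_true]
      simp_rw [hz]
      have key := card_preimage_aux (combMap (F := F) h) (combMap_surj h hs)
        (walkX x0 h0 (pad h) (pad s) 0 (pad t) (pad t') (m + 1)) (fun y => f y ≠ 0)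
      simp only [Fintype.card_fun, Fintype.card_fin, ← hQ] at key
      have key' := congrArg (Nat.cast (R := ℝ)) key
      push_cast at key'
      rw [if_neg (not_not.2 hs), add_zero]
      refine le_of_mul_le_mul_right ?_ (pow_pos hQ0 m)
      have h5 := mul_le_mul_of_nonneg_right hf (pow_nonneg hQ0.le (m + 1))
      rw [key']
      linarith
    · simp only [hs, ne_eq, not_false_eq_true, if_true]
      have h1 := Finset.card_le_univ (Finset.univ.filter (fun s' : Fin (m + 1) → F =>
        f (walkX x0 h0 (pad h) (pad s) (pad s') (pad t) (pad t') (m + 1)) ≠ 0))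
      simp only [Fintype.card_fun, Fintype.card_fin, ← hQ] at h1
      have h2 : ((Finset.univ.filter (fun s' : Fin (m + 1) → F =>
        f (walkX x0 h0 (pad h) (pad s) (pad s') (pad t) (pad t') (m + 1)) ≠ 0)).card : ℝ)
        ≤ (Q : ℝ) ^ (m + 1) := by exact_mod_cast h1
      have h3 : 0 ≤ τ * (Q : ℝ) ^ (m + 1) := by positivity
      simp only [ne_eq] at h2
      linarith
  have hbad : ((Finset.univ.filter (fun h : Fin (m + 1) → Fin m → H =>
      Submodule.span H (Set.range h) ≠ ⊤)).card : ℝ) ≤ (q : ℝ) ^ (m * (m + 1)) / q := by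
    rw [le_div_iff₀ hq0]
    exact_mod_cast bad_card (H := H) m
  rw [div_le_iff₀ (by positivity)]
  have hsum : ((Finset.univ.filter
        (fun ω : (Fin (m + 1) → (Fin m → H))
                  × (Fin (m + 1) → F) × (Fin (m + 1) → F) × (Fin m → F) × (Fin m → F) =>
          f (walkX x0 h0 (pad ω.1) (pad ω.2.1) (pad ω.2.2.1) (pad ω.2.2.2.1)
              (pad ω.2.2.2.2) (m + 1)) ≠ 0)).card : ℝ)
      = ∑ h : Fin (m + 1) → (Fin m → H), ∑ s : Fin (m + 1) → F, ∑ p : (Fin m → F) × (Fin m → F),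
        ((Finset.univ.filter (fun s' : Fin (m + 1) → F =>
        f (walkX x0 h0 (pad h) (pad s) (pad s') (pad p.1) (pad p.2) (m + 1)) ≠ 0)).card : ℝ) := by
    simp only [Finset.natCast_card_filter]
    rw [Fintype.sum_prod_type]
    refine Finset.sum_congr rfl fun h _ => ?_
    rw [Fintype.sum_prod_type]
    refine Finset.sum_congr rfl fun s _ => ?_
    rw [Fintype.sum_prod_type]
    rw [Finset.sum_comm]
  rw [hsum]
  calc _ ≤ ∑ h : Fin (m + 1) → (Fin m → H), ∑ s : Fin (m + 1) → F,
        ∑ p : (Fin m → F) × (Fin m → F),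
        (τ + if Submodule.span H (Set.range h) ≠ ⊤ then 1 else 0) * (Q : ℝ) ^ (m + 1) :=
        Finset.sum_le_sum fun h _ => Finset.sum_le_sum fun s _ => Finset.sum_le_sum fun p _ =>
          hN h s p.1 p.2
    _ = (τ * (q : ℝ) ^ (m * (m + 1)) + ((Finset.univ.filter (fun h : Fin (m + 1) → Fin m → H =>
      Submodule.span H (Set.range h) ≠ ⊤)).card : ℝ)) * (Q : ℝ) ^ (4 * m + 2) := by
        rw [Finset.natCast_card_filter]
        simp only [Finset.sum_const, Finset.card_univ, Fintype.card_prod, Fintype.card_fun,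
          Fintype.card_fin, nsmul_eq_mul, ← hQ, ← Finset.mul_sum, ← Finset.sum_mul,
          Finset.sum_add_distrib, ← hq]
        push_cast
        ring
    _ ≤ (τ * (q : ℝ) ^ (m * (m + 1)) + (q : ℝ) ^ (m * (m + 1)) / q) * (Q : ℝ) ^ (4 * m + 2) := by
        gcongr
    _ = (τ + 1 / q) * ((q : ℝ) ^ (m * (m + 1)) * (Q : ℝ) ^ (4 * m + 2)) := by ring
    _ ≤ _ := by
        gcongr
        norm_num
end
end

section
/- Let F be a finite field with n = |F|, and let δ, γ be reals with δ ≥ 3/4 and 0 < γ ≤ δ/8. Let g : F × F → F be a function with at least (δ − 2γ)·n² nonzero values. Then the number of pairs (x, y) ∈ (F²)² such that |{t ∈ F : g(x + t·y) ≠ 0}| < 2γ·n is at most (4/n)·n⁴. (Equivalently: a uniformly random line in F², with uniform base point and direction, has fewer than 2γn points at which g is nonzero with probability at most 4/n.) -/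
open scoped Classical

lemma sum_one_point {F : Type*} [Field F] [Fintype F] (f : F × F → ℝ) (t : F) :
    ∑ xy : (F × F) × (F × F), f (xy.1 + t • xy.2)
      = (Fintype.card F : ℝ) ^ 2 * ∑ p, f p := by
  rw [Fintype.sum_prod_type_right]
  have h : ∀ y : F × F, ∑ x : F × F, f (x + t • y) = ∑ p, f p := fun y =>
    Equiv.sum_comp (Equiv.addRight (t • y)) f
  simp only [h, Finset.sum_const, Finset.card_univ, Fintype.card_prod, nsmul_eq_mul]
  push_cast
  ring

lemma sum_two_points {F : Type*} [Field F] [Fintype F] (f : F × F → ℝ) (t u : F) (htu : t ≠ u) :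
    ∑ xy : (F × F) × (F × F), f (xy.1 + t • xy.2) * f (xy.1 + u • xy.2)
      = (∑ p, f p) ^ 2 := by
  have hinj : Function.Injective
      (fun xy : (F × F) × (F × F) => (xy.1 + t • xy.2, xy.1 + u • xy.2)) := by
    rintro ⟨x, y⟩ ⟨x', y'⟩ h
    simp only [Prod.mk.injEq] at h
    obtain ⟨h1, h2⟩ := h
    have h3 : (t - u) • y = (t - u) • y' := by
      have : (x + t • y) - (x + u • y) = (x' + t • y') - (x' + u • y') := by rw [h1, h2]
      rw [sub_smul, sub_smul]
      simpa using this
    have h4 : y = y' := smul_right_injective _ (sub_ne_zero.mpr htu) h3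
    subst h4
    simpa using h1
  have hb := Finite.injective_iff_bijective.mp hinj
  have := hb.sum_comp (fun ab : (F × F) × (F × F) => f ab.1 * f ab.2)
  rw [this, Fintype.sum_prod_type, sq, Finset.sum_mul_sum]

lemma second_moment {F : Type*} [Field F] [Fintype F] (f : F × F → ℝ)
    (hf : ∀ p, f p * f p = f p) :
    ∑ xy : (F × F) × (F × F), (∑ t : F, f (xy.1 + t • xy.2)) ^ 2
      = (Fintype.card F : ℝ) ^ 3 * ∑ p, f p
        + (Fintype.card F : ℝ) * ((Fintype.card F : ℝ) - 1) * (∑ p, f p) ^ 2 := by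
  have h1 : ∀ t u : F, ∑ xy : (F × F) × (F × F), f (xy.1 + t • xy.2) * f (xy.1 + u • xy.2)
      = (∑ p, f p) ^ 2 + if t = u then (Fintype.card F : ℝ) ^ 2 * (∑ p, f p)
          - (∑ p, f p) ^ 2 else 0 := by
    intro t u
    split_ifs with h
    · subst h
      simp only [hf, sum_one_point]
      ring
    · rw [sum_two_points f t u h, add_zero]
  simp only [sq (∑ t : F, f (_ + t • _)), Finset.sum_mul_sum]
  rw [Finset.sum_comm]
  have h2 : ∀ t : F, ∑ xy : (F × F) × (F × F), ∑ u : F,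
      f (xy.1 + t • xy.2) * f (xy.1 + u • xy.2)
      = (Fintype.card F : ℝ) * (∑ p, f p) ^ 2 + ((Fintype.card F : ℝ) ^ 2 * (∑ p, f p)
          - (∑ p, f p) ^ 2) := by
    intro t
    rw [Finset.sum_comm]
    simp only [h1, Finset.sum_add_distrib, Finset.sum_ite_eq, Finset.mem_univ, if_true,
      Finset.sum_const, Finset.card_univ, nsmul_eq_mul]
  simp only [h2, Finset.sum_const, Finset.card_univ, nsmul_eq_mul]
  ring

/-- **Claim 4.7 (sampling a random line from a plane with many nonzeros).**
Let `F` be a finite field with `n = |F|`, let `δ ≥ 3/4` and `0 < γ ≤ δ/8`, and let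
`g : F × F → F` have at least `(δ − 2γ)·n²` nonzero values.  Then the number of pairs
`(x, y) ∈ (F²)²` such that `g` is nonzero at fewer than `2γn` points of the
parametrized line `t ↦ x + t • y` is at most `(4/n) · n⁴`. -/
theorem line_few_nonzeros_rare (F : Type*) [Field F] [Fintype F]
    (n : ℕ) (hn : n = Fintype.card F)
    (δ γ : ℝ) (hδ : 3 / 4 ≤ δ) (hγ0 : 0 < γ) (hγ : γ ≤ δ / 8)
    (g : F × F → F)
    (hg : (δ - 2 * γ) * (n : ℝ) ^ 2
            ≤ ((Finset.univ.filter (fun p : F × F => g p ≠ 0)).card : ℝ)) :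
    ((Finset.univ.filter (fun xy : (F × F) × (F × F) =>
        ((Finset.univ.filter (fun t : F => g (xy.1 + t • xy.2) ≠ 0)).card : ℝ)
          < 2 * γ * (n : ℝ))).card : ℝ)
      ≤ (4 / (n : ℝ)) * (n : ℝ) ^ 4 := by
  set f : F × F → ℝ := fun p => if g p ≠ 0 then 1 else 0 with hfdef
  have hff : ∀ p, f p * f p = f p := by
    intro p
    simp only [hfdef]
    split_ifs <;> simp
  have hs : ((Finset.univ.filter (fun p : F × F => g p ≠ 0)).card : ℝ) = ∑ p, f p := by
    rw [Finset.sum_boole]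
  have hX : ∀ xy : (F × F) × (F × F),
      ((Finset.univ.filter (fun t : F => g (xy.1 + t • xy.2) ≠ 0)).card : ℝ)
        = ∑ t : F, f (xy.1 + t • xy.2) := by
    intro xy
    rw [Finset.sum_boole]
  have hM2 := second_moment f hff
  have hM1 : ∑ xy : (F × F) × (F × F), ∑ t : F, f (xy.1 + t • xy.2)
      = (n : ℝ) ^ 3 * ∑ p, f p := by
    rw [Finset.sum_comm]
    simp only [sum_one_point, Finset.sum_const, Finset.card_univ, nsmul_eq_mul, ← hn]
    ring
  rw [hs] at hg
  simp only [hX]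
  rw [← hn] at hM2
  have hnpos : (0 : ℝ) < n := by
    rw [hn]
    exact_mod_cast Fintype.card_pos
  set s : ℝ := ∑ p, f p with hsdef
  set X : (F × F) × (F × F) → ℝ := fun xy => ∑ t : F, f (xy.1 + t • xy.2) with hXdef
  change ((Finset.univ.filter (fun xy => X xy < 2 * γ * (n : ℝ))).card : ℝ) ≤ _
  change ∑ xy, X xy ^ 2 = _ at hM2
  change ∑ xy, X xy = _ at hM1
  set B := Finset.univ.filter (fun xy => X xy < 2 * γ * (n : ℝ)) with hB
  have hn2 : (0 : ℝ) < (n : ℝ) ^ 2 := by positivity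
  have hs1 : 9 / 16 * (n : ℝ) ^ 2 ≤ s := by nlinarith
  have hs2 : 6 * γ * (n : ℝ) ^ 2 ≤ s := by nlinarith
  have hspos : 0 < s := by nlinarith
  have hvar : ∑ xy, (s - n * X xy) ^ 2 = (n : ℝ) ^ 5 * s - (n : ℝ) ^ 3 * s ^ 2 := by
    have h : ∀ xy, (s - n * X xy) ^ 2 = s ^ 2 - (2 * s * n) * X xy + (n : ℝ) ^ 2 * X xy ^ 2 :=
      fun xy => by ring
    simp only [h, Finset.sum_add_distrib, Finset.sum_sub_distrib, ← Finset.mul_sum, hM1, hM2,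
      Finset.sum_const, Finset.card_univ, nsmul_eq_mul, Fintype.card_prod, ← hn]
    push_cast
    ring
  have hlow : (B.card : ℝ) * (2 / 3 * s) ^ 2 ≤ ∑ xy, (s - n * X xy) ^ 2 := by
    calc (B.card : ℝ) * (2 / 3 * s) ^ 2 = ∑ xy ∈ B, (2 / 3 * s) ^ 2 := by
          rw [Finset.sum_const, nsmul_eq_mul]
      _ ≤ ∑ xy ∈ B, (s - n * X xy) ^ 2 := by
          apply Finset.sum_le_sum
          intro xy hxy
          have hlt : X xy < 2 * γ * n := (Finset.mem_filter.mp hxy).2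
          have : n * X xy ≤ s / 3 := by nlinarith
          apply pow_le_pow_left₀ (by positivity)
          linarith
      _ ≤ _ := Finset.sum_le_sum_of_subset_of_nonneg (Finset.subset_univ _)
          (fun _ _ _ => sq_nonneg _)
  rw [hvar] at hlow
  have h1 : (B.card : ℝ) * (4 / 9 * s) ≤ (n : ℝ) ^ 3 * ((n : ℝ) ^ 2 - s) := by
    apply le_of_mul_le_mul_right _ hspos
    linarith
  have h2 : (n : ℝ) ^ 3 * ((n : ℝ) ^ 2 - s) ≤ (n : ℝ) ^ 3 * (7 / 9 * s) := by
    apply mul_le_mul_of_nonneg_left _ (by positivity)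
    linarith
  have h3 : (B.card : ℝ) ≤ 7 / 4 * (n : ℝ) ^ 3 := by
    apply le_of_mul_le_mul_right _ hspos
    linarith
  have h4 : 4 / (n : ℝ) * (n : ℝ) ^ 4 = 4 * (n : ℝ) ^ 3 := by
    field_simp
  rw [h4]
  have : (0 : ℝ) < (n : ℝ) ^ 3 := by positivity
  linarith
end

section
/- Let d, m ≥ 2 be integers, let H be a finite field, and let F be a field extension of H of degree m with |F| ≥ 2md; write n = |F| and δ = 1 − d/n (so δ ≥ 1 − 1/(2m) ≥ 3/4). Let τ and γ be reals with 0 ≤ τ ≤ δ/2 and 0 < γ ≤ δ/8. Let f : F^m → F, suppose there is an m-variate polynomial Q* over F of total degree at most d whose evaluation differs from f on at most τ·n^m points, and let x ∈ F^m satisfy f(x) ≠ Q*(x). Consider the random walk that samples h₀, h'₀ ∈ H^m uniformly, sets x₀ = x, ĥ₀ = ι(h₀), and for i = 1, …, m samples s_{i−1}, s'_{i−1}, t_{i−1}, t'_{i−1} ∈ F and h'_i ∈ H^m uniformly and independently and sets x_i = x_{i−1} + s_{i−1} • ĥ_{i−1} + s'_{i−1} • ι(h'_{i−1}) and ĥ_i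 = t_{i−1} • ĥ_{i−1} + t'_{i−1} • ι(h'_{i−1}). For 0 ≤ i ≤ m let g_i : F² → F be the parametrized restriction g_i(a, b) = f(x_i + a • ĥ_i + b • ι(h'_i)). Then with probability at least (1 − 4/n)^m − (τ + 2/|H|)/(δ − 2γ) over all the random choices, either (i) min over Q ∈ RM₂(d) of [ (1/2)·𝟙[g₀(0,0) ≠ Q(0,0)] + |{p ∈ F² : g₀(p) ≠ Q(p)}|/(2n²) ] is at least γ, or (ii) there exists i ∈ {1, …, m} such that min over Q ∈ RM₂(d) of [ |{t ∈ F : g_i(t, 0) ≠ Q(t, 0)}|/(2n) + |{p ∈ F² : g_i(p) ≠ Q(p)}|/(2n²) ] is at least γ. -/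
open scoped Classical

noncomputable section

/-- Prepend an element to a `Fin n`-indexed family, yielding a `ℕ`-indexed family. -/
def cons0 {β : Type*} [Zero β] {n : ℕ} (b : β) (f : Fin n → β) : ℕ → β
  | 0 => b
  | (i + 1) => pad f i

/-- The parametrized restriction `g_i(a, b) = f(x_i + a • ĥ_i + b • ι(h'_i))` of `f`
to the `i`-th plane of the walk. -/
def gRest {H F : Type*} [CommSemiring H] [Field F] [Algebra H F] {m : ℕ}
    (f : (Fin m → F) → F) (x0 : Fin m → F) (h0 : Fin m → H) (h' : ℕ → Fin m → H)
    (s s' t t' : ℕ → F) (i : ℕ) : F × F → F :=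
  fun ab => f (walkX x0 h0 h' s s' t t' i + ab.1 • walkH h0 h' t t' i + ab.2 • iotaV (h' i))

/-- The parametrized restriction `g_i` determined by a sample
`ω ∈ ((H^m) × F⁴)^k` of the walk (with fixed `x₀ ∈ F^m`, `h₀, h'₀ ∈ H^m`), where
`ω i = (h'_{i+1}, s_i, s'_i, t_i, t'_i)`. -/
def walkG {H F : Type*} [CommSemiring H] [Field F] [Algebra H F] {m k : ℕ}
    (f : (Fin m → F) → F) (x0 : Fin m → F) (h0 h'0 : Fin m → H)
    (ω : Fin k → ((Fin m → H) × (F × F × F × F))) (i : ℕ) : F × F → F :=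
  gRest f x0 h0 (cons0 h'0 (fun j => (ω j).1))
    (pad (fun j => (ω j).2.1)) (pad (fun j => (ω j).2.2.1))
    (pad (fun j => (ω j).2.2.2.1)) (pad (fun j => (ω j).2.2.2.2)) i

/-- The bivariate Reed–Muller code: evaluation tables on `F²` of bivariate
polynomials over `F` of total degree at most `d`. -/
def RM2 (F : Type*) [CommSemiring F] (d : ℕ) : Set ((F × F) → F) :=
  {g | ∃ Q : MvPolynomial (Fin 2) F, Q.totalDegree ≤ d ∧
        ∀ p : F × F, g p = MvPolynomial.eval ![p.1, p.2] Q}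


/-- Double counting by translations. -/
lemma count_translate {Ω Q : Type*} [AddCommGroup Ω] [Fintype Ω] [Fintype Q] [Nonempty Q]
    (e : Q → Ω) (B : Ω → Prop) [DecidablePred B] (c : ℝ)
    (h : ∀ ω, ((Finset.univ.filter (fun q : Q => B (ω + e q))).card : ℝ)
      ≤ c * (Fintype.card Q : ℝ)) :
    ((Finset.univ.filter (fun ω : Ω => B ω)).card : ℝ) ≤ c * (Fintype.card Ω : ℝ) := by
  have h1 : ∑ ω : Ω, ((Finset.univ.filter (fun q : Q => B (ω + e q))).card : ℝ)
      = (Fintype.card Q : ℝ) * ((Finset.univ.filter (fun ω : Ω => B ω)).card : ℝ) := by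
    simp only [Finset.card_filter, Nat.cast_sum]
    rw [Finset.sum_comm]
    have : ∀ q : Q, ∑ ω : Ω, (((if B (ω + e q) then 1 else 0 : ℕ)) : ℝ)
        = ∑ ω : Ω, (((if B ω then 1 else 0 : ℕ)) : ℝ) := fun q =>
      Equiv.sum_comp (Equiv.addRight (e q)) (fun ω => (((if B ω then 1 else 0 : ℕ)) : ℝ))
    rw [Finset.sum_congr rfl (fun q _ => this q)]
    simp
  have h2 := Finset.sum_le_sum (fun (ω : Ω) (_ : ω ∈ Finset.univ) => h ω)
  rw [h1] at h2
  have hQ : (0 : ℝ) < Fintype.card Q := by exact_mod_cast Fintype.card_pos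
  simp only [Finset.sum_const, Finset.card_univ, nsmul_eq_mul] at h2
  nlinarith

/-- Schwartz–Zippel for two codewords. -/
lemma rm2_dist {F : Type*} [Field F] [Fintype F] {d : ℕ} {P P' : F × F → F}
    (hP : P ∈ RM2 F d) (hP' : P' ∈ RM2 F d) (hne : P ≠ P') :
    (Fintype.card F : ℝ) ^ 2 - d * (Fintype.card F : ℝ) ≤
      ((Finset.univ.filter (fun p : F × F => P p ≠ P' p)).card : ℝ) := by
  obtain ⟨Q, hQ, hPQ⟩ := hP
  obtain ⟨Q', hQ', hPQ'⟩ := hP'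
  have hn0 : Q - Q' ≠ 0 := by
    intro h
    apply hne
    funext p
    rw [hPQ, hPQ', sub_eq_zero.mp h]
  have hdeg : (Q - Q').totalDegree ≤ d :=
    (MvPolynomial.totalDegree_sub _ _).trans (max_le hQ hQ')
  have sz := MvPolynomial.schwartz_zippel_totalDegree hn0 (Finset.univ : Finset F)
  have hF : (0 : ℝ) < Fintype.card F := by exact_mod_cast Fintype.card_pos
  have hcard : (Finset.univ.filter (fun p : F × F => ¬ P p ≠ P' p)).card
      = ((Fintype.piFinset fun _ : Fin 2 => (Finset.univ : Finset F)).filter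
        (fun f => MvPolynomial.eval f (Q - Q') = 0)).card := by
    apply Finset.card_bij (fun p _ => ![p.1, p.2])
    · intro p hp
      simp only [Finset.mem_filter, Finset.mem_univ, true_and, not_not, Fintype.mem_piFinset,
        implies_true] at hp ⊢
      rw [map_sub, ← hPQ, ← hPQ', hp, sub_self]
    · intro p _ p' _ h
      have h0 := congrFun h 0
      have h1 := congrFun h 1
      simp at h0 h1
      exact Prod.ext h0 h1
    · intro v hv
      have hv2 : v = ![v 0, v 1] := by
        funext i; fin_cases i <;> rfl
      refine ⟨(v 0, v 1), ?_, hv2.symm⟩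
      simp only [Finset.mem_filter, Finset.mem_univ, true_and, not_not, Fintype.mem_piFinset,
        implies_true] at hv ⊢
      rw [hPQ, hPQ', ← sub_eq_zero, ← map_sub, ← hv2, hv]
  rw [← hcard] at sz
  have hsum := Finset.card_filter_add_card_filter_not (s := (Finset.univ : Finset (F × F)))
    (fun p : F × F => P p ≠ P' p)
  rw [Finset.card_univ, Fintype.card_prod] at hsum
  have hsumR : ((Finset.univ.filter (fun p : F × F => P p ≠ P' p)).card : ℝ)
    + ((Finset.univ.filter (fun p : F × F => ¬ P p ≠ P' p)).card : ℝ)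
      = (Fintype.card F : ℝ) * (Fintype.card F : ℝ) := by exact_mod_cast hsum
  rw [Finset.card_univ] at sz
  have sz2 : ((Finset.univ.filter (fun p : F × F => ¬ P p ≠ P' p)).card : ℝ)
      / (Fintype.card F : ℝ) ^ 2 ≤ ((Q - Q').totalDegree : ℝ) / (Fintype.card F : ℝ) := by
    have := (NNRat.cast_le (K := ℝ)).mpr sz
    push_cast at this
    exact this
  have hdR : ((Q - Q').totalDegree : ℝ) ≤ d := by exact_mod_cast hdeg
  rw [div_le_div_iff₀ (by positivity) hF] at sz2
  have : ((Finset.univ.filter (fun p : F × F => ¬ P p ≠ P' p)).card : ℝ)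
      ≤ d * (Fintype.card F : ℝ) := by
    have h3 : ((Finset.univ.filter (fun p : F × F => ¬ P p ≠ P' p)).card : ℝ)
      * (Fintype.card F : ℝ) ≤ (d * (Fintype.card F : ℝ)) * (Fintype.card F : ℝ) := by
      nlinarith [mul_le_mul_of_nonneg_right hdR (by positivity : (0:ℝ) ≤ (Fintype.card F : ℝ)^2)]
    exact le_of_mul_le_mul_right h3 hF
  nlinarith

/-- Restriction of a codeword to a parametrized line is a univariate polynomial. -/
lemma rm2_line {F : Type*} [Field F] {d : ℕ} {P : F × F → F}
    (hP : P ∈ RM2 F d) (s s' t t' : F) :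
    ∃ p : Polynomial F, p.natDegree ≤ d ∧ ∀ a, P (s + a * t, s' + a * t') = p.eval a := by
  obtain ⟨Q, hQ, hPQ⟩ := hP
  refine ⟨MvPolynomial.aeval ![Polynomial.C s + Polynomial.X * Polynomial.C t,
    Polynomial.C s' + Polynomial.X * Polynomial.C t'] Q, ?_, ?_⟩
  · have := MvPolynomial.aeval_natDegree_le (n := 1) Q hQ
      ![Polynomial.C s + Polynomial.X * Polynomial.C t,
        Polynomial.C s' + Polynomial.X * Polynomial.C t'] (by
        intro i
        fin_cases i
        · simp only [Fin.zero_eta, Matrix.cons_val_zero]; compute_degree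
        · simp only [Fin.mk_one, Matrix.cons_val_one, Matrix.cons_val_fin_one]; compute_degree)
    simpa using this
  · intro a
    rw [hPQ]
    rw [← Polynomial.coe_evalRingHom, MvPolynomial.aeval_def, MvPolynomial.hom_eval₂]
    rw [MvPolynomial.eval, MvPolynomial.coe_eval₂Hom]
    congr 1
    · ext; simp
    · funext i
      fin_cases i <;> simp <;> exact mul_comm _ _

/-- Two polynomials of degree at most `d` disagreeing on fewer than `n - d` points agree. -/
lemma uni_eq {F : Type*} [Field F] [Fintype F] {d : ℕ} {p q : Polynomial F}
    (hp : p.natDegree ≤ d) (hq : q.natDegree ≤ d)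
    (h : ((Finset.univ.filter (fun a : F => p.eval a ≠ q.eval a)).card : ℝ)
      < (Fintype.card F : ℝ) - d) : p = q := by
  by_contra hne
  have hsub : p - q ≠ 0 := sub_ne_zero.mpr hne
  have hsum := Finset.card_filter_add_card_filter_not (s := (Finset.univ : Finset F))
    (fun a : F => p.eval a ≠ q.eval a)
  rw [Finset.card_univ] at hsum
  have hle : (Finset.univ.filter (fun a : F => ¬ p.eval a ≠ q.eval a)).card ≤ d := by
    have h1 : (Finset.univ.filter (fun a : F => ¬ p.eval a ≠ q.eval a))
        ⊆ (p - q).roots.toFinset := by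
      intro a ha
      simp only [Finset.mem_filter, Finset.mem_univ, true_and, not_not] at ha
      simp [hsub, ha]
    calc _ ≤ _ := Finset.card_le_card h1
      _ ≤ _ := Multiset.toFinset_card_le _
      _ ≤ _ := Polynomial.card_roots' _
      _ ≤ _ := (Polynomial.natDegree_sub_le _ _).trans (max_le hp hq)
  have hsumR : ((Finset.univ.filter (fun a : F => p.eval a ≠ q.eval a)).card : ℝ)
    + ((Finset.univ.filter (fun a : F => ¬ p.eval a ≠ q.eval a)).card : ℝ)
      = (Fintype.card F : ℝ) := by exact_mod_cast hsum
  have hleR : ((Finset.univ.filter (fun a : F => ¬ p.eval a ≠ q.eval a)).card : ℝ) ≤ d := by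
    exact_mod_cast hle
  linarith

/-- Restriction of a polynomial to a parametrized plane is a codeword. -/
lemma plane_rm2 {F : Type*} [Field F] {m d : ℕ} (Q : MvPolynomial (Fin m) F)
    (hQ : Q.totalDegree ≤ d) (x u v : Fin m → F) :
    (fun ab : F × F => MvPolynomial.eval (x + ab.1 • u + ab.2 • v) Q) ∈ RM2 F d := by
  let L : Fin m → MvPolynomial (Fin 2) F := fun j =>
    MvPolynomial.C (x j) + MvPolynomial.X 0 * MvPolynomial.C (u j)
      + MvPolynomial.X 1 * MvPolynomial.C (v j)
  have hL : ∀ j, (L j).totalDegree ≤ 1 := by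
    intro j
    refine (MvPolynomial.totalDegree_add _ _).trans (max_le ?_ ?_)
    · refine (MvPolynomial.totalDegree_add _ _).trans (max_le ?_ ?_)
      · simp
      · refine (MvPolynomial.totalDegree_mul _ _).trans ?_
        simp
    · refine (MvPolynomial.totalDegree_mul _ _).trans ?_
      simp
  refine ⟨MvPolynomial.aeval L Q, ?_, ?_⟩
  · rw [MvPolynomial.aeval_def, MvPolynomial.eval₂_eq]
    apply MvPolynomial.totalDegree_finsetSum_le
    intro s hs
    refine (MvPolynomial.totalDegree_mul _ _).trans ?_
    have h0 : (algebraMap F (MvPolynomial (Fin 2) F) (MvPolynomial.coeff s Q)).totalDegree = 0 := by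
      rw [MvPolynomial.algebraMap_eq, MvPolynomial.totalDegree_C]
    rw [h0, zero_add]
    refine (MvPolynomial.totalDegree_finsetProd _ _).trans ?_
    refine le_trans ?_ ((MvPolynomial.le_totalDegree hs).trans hQ)
    rw [Finsupp.sum]
    refine Finset.sum_le_sum fun i _ => ?_
    refine (MvPolynomial.totalDegree_pow _ _).trans ?_
    nlinarith [hL i]
  · intro p
    rw [MvPolynomial.aeval_def, MvPolynomial.eval₂_eq', map_sum]
    simp only [MvPolynomial.eval_eq' _ Q]
    refine Finset.sum_congr rfl fun s _ => ?_
    rw [map_mul, map_prod, MvPolynomial.algebraMap_eq, MvPolynomial.eval_C]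
    congr 1
    refine Finset.prod_congr rfl fun i _ => ?_
    simp [L]

/-- The point with parameter `a` on the line with parameters `q`. -/
def lpt {F : Type*} [Field F] (q : F × F × F × F) (a : F) : F × F :=
  (q.1 + a * q.2.2.1, q.2.1 + a * q.2.2.2)

lemma line_second_moment {F : Type*} [Field F] [Fintype F] (v : F × F → ℝ)
    (hv : ∑ p, v p = 0) :
    ∑ q : F × F × F × F, (∑ a : F, v (lpt q a)) ^ 2
      = (Fintype.card F : ℝ) ^ 3 * ∑ p, v p ^ 2 := by
  have hpair : ∀ a b : F, ∑ q : F × F × F × F, v (lpt q a) * v (lpt q b)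
      = if a = b then (Fintype.card F : ℝ) ^ 2 * ∑ p, v p ^ 2 else 0 := by
    intro a b
    split_ifs with hab
    · subst hab
      let φ : F × F × F × F → (F × F) × (F × F) := fun q => (lpt q a, q.2.2)
      have hφ : Function.Bijective φ := by
        rw [Fintype.bijective_iff_injective_and_card]
        refine ⟨?_, by simp only [Fintype.card_prod]; ring⟩
        rintro ⟨s, s', t, t'⟩ ⟨r, r', u, u'⟩ h
        simp only [φ, lpt, Prod.mk.injEq] at h ⊢
        obtain ⟨⟨h1, h2⟩, h3, h4⟩ := h
        subst h3 h4
        exact ⟨add_right_cancel h1, add_right_cancel h2, rfl, rfl⟩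
      rw [Fintype.sum_bijective φ hφ _ (fun z : (F × F) × (F × F) => v z.1 ^ 2)
        (fun q => by simp only [φ]; ring)]
      rw [Fintype.sum_prod_type]
      simp only [Finset.sum_const, Finset.card_univ, Fintype.card_prod, nsmul_eq_mul]
      rw [← Finset.mul_sum]
      push_cast
      ring
    · let φ : F × F × F × F → (F × F) × (F × F) := fun q => (lpt q a, lpt q b)
      have hφ : Function.Bijective φ := by
        rw [Fintype.bijective_iff_injective_and_card]
        refine ⟨?_, by simp only [Fintype.card_prod]; ring⟩
        rintro ⟨s, s', t, t'⟩ ⟨r, r', u, u'⟩ h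
        simp only [φ, lpt, Prod.mk.injEq] at h ⊢
        obtain ⟨⟨h1, h2⟩, h3, h4⟩ := h
        have hab' : a - b ≠ 0 := sub_ne_zero.mpr hab
        have e1 : t = u := by
          apply mul_left_cancel₀ hab'
          linear_combination h1 - h3
        have e2 : t' = u' := by
          apply mul_left_cancel₀ hab'
          linear_combination h2 - h4
        subst e1 e2
        exact ⟨add_right_cancel h1, add_right_cancel h2, rfl, rfl⟩
      rw [Fintype.sum_bijective φ hφ _ (fun z : (F × F) × (F × F) => v z.1 * v z.2)
        (fun q => rfl)]
      rw [Fintype.sum_prod_type]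
      simp only [← Finset.mul_sum, hv, mul_zero, Finset.sum_const_zero]
  simp only [sq (∑ a : F, v (lpt _ a)), Finset.sum_mul_sum]
  rw [Finset.sum_comm]
  have : ∀ a : F, ∑ q : F × F × F × F, ∑ b : F, v (lpt q a) * v (lpt q b)
      = (Fintype.card F : ℝ) ^ 2 * ∑ p, v p ^ 2 := by
    intro a
    rw [Finset.sum_comm]
    simp only [hpair]
    simp
  simp only [this, Finset.sum_const, Finset.card_univ, nsmul_eq_mul]
  ring

/-- Chebyshev for the number of points of a set on a random line. -/
lemma line_cheb {F : Type*} [Field F] [Fintype F] (A : F × F → Prop) [DecidablePred A] (α : ℝ)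
    (hα : ((Finset.univ.filter (fun p : F × F => A p)).card : ℝ)
      = α * (Fintype.card F : ℝ) ^ 2) (ε : ℝ) (hε : 0 < ε) :
    ((Finset.univ.filter (fun q : F × F × F × F =>
      (ε * (Fintype.card F : ℝ)) ^ 2 ≤
      (((Finset.univ.filter (fun a : F => A (lpt q a))).card : ℝ)
        - α * (Fintype.card F : ℝ)) ^ 2)).card : ℝ)
      ≤ α * (1 - α) / ε ^ 2 * (Fintype.card F : ℝ) ^ 3 := by
  set n : ℝ := (Fintype.card F : ℝ) with hn
  have hF : (0 : ℝ) < n := by rw [hn]; exact_mod_cast Fintype.card_pos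
  let v : F × F → ℝ := fun p => (if A p then 1 else 0) - α
  have hu : ∑ p : F × F, (if A p then (1 : ℝ) else 0) = α * n ^ 2 := by
    rw [← hα, Finset.card_filter]; push_cast; rfl
  have hc : ∑ p : F × F, α = α * n ^ 2 := by
    simp only [Finset.sum_const, Finset.card_univ, Fintype.card_prod, nsmul_eq_mul]
    push_cast; rw [← hn]; ring
  have hv : ∑ p, v p = 0 := by
    simp only [v, Finset.sum_sub_distrib]
    rw [hu, hc, sub_self]
  have hv2 : ∑ p, v p ^ 2 = n ^ 2 * (α * (1 - α)) := by
    have : ∀ p, v p ^ 2 = (1 - 2 * α) * (if A p then (1 : ℝ) else 0) + α * α := by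
      intro p
      simp only [v]
      split_ifs <;> ring
    simp only [this, Finset.sum_add_distrib, ← Finset.mul_sum, hu]
    rw [hc]
    ring
  have key := line_second_moment v hv
  rw [hv2, ← hn] at key
  have hX : ∀ q : F × F × F × F, ∑ a : F, v (lpt q a)
      = ((Finset.univ.filter (fun a : F => A (lpt q a))).card : ℝ) - α * n := by
    intro q
    simp only [v, Finset.sum_sub_distrib, Finset.card_filter]
    push_cast
    simp only [Finset.sum_const, Finset.card_univ, nsmul_eq_mul]
    rw [← hn]; ring
  simp only [hX] at key
  set S := Finset.univ.filter (fun q : F × F × F × F =>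
      (ε * n) ^ 2 ≤ (((Finset.univ.filter (fun a : F => A (lpt q a))).card : ℝ) - α * n) ^ 2)
    with hS
  have h1 : (S.card : ℝ) * (ε * n) ^ 2 ≤ n ^ 3 * (n ^ 2 * (α * (1 - α))) := by
    rw [← key, ← nsmul_eq_mul]
    refine (Finset.card_nsmul_le_sum S _ _ ?_).trans
      (Finset.sum_le_sum_of_subset_of_nonneg (Finset.subset_univ S) ?_)
    · intro q hq
      exact (Finset.mem_filter.mp hq).2
    · intro q _ _
      positivity
  rw [div_mul_eq_mul_div, le_div_iff₀ (by positivity)]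
  have h2 : ((S.card : ℝ) * ε ^ 2) * n ^ 2 ≤ (α * (1 - α) * n ^ 3) * n ^ 2 := by
    nlinarith
  exact le_of_mul_le_mul_right h2 (by positivity)

/-- The bad event of one step of the walk. -/
def badStep {F : Type*} [Field F] [Fintype F] (d : ℕ) (γ δ : ℝ) (g c : F × F → F)
    (q : F × F × F × F) : Prop :=
  ∃ P ∈ RM2 F d,
    ((Finset.univ.filter (fun p : F × F => g p ≠ P p)).card : ℝ)
      < 2 * γ * (Fintype.card F : ℝ) ^ 2 ∧ P ≠ c ∧
    ((∀ a, P (lpt q a) = c (lpt q a)) ∨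
      (δ - 2 * γ) * (Fintype.card F : ℝ) ≤
        ((Finset.univ.filter (fun a : F => g (lpt q a) ≠ P (lpt q a))).card : ℝ))

lemma card_ne_triangle {α β : Type*} [Fintype α] (f g h : α → β) :
    ((Finset.univ.filter (fun p => f p ≠ h p)).card : ℝ) ≤
      ((Finset.univ.filter (fun p => f p ≠ g p)).card : ℝ)
      + ((Finset.univ.filter (fun p => g p ≠ h p)).card : ℝ) := by
  have : Finset.univ.filter (fun p => f p ≠ h p) ⊆
      Finset.univ.filter (fun p => f p ≠ g p) ∪ Finset.univ.filter (fun p => g p ≠ h p) := by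
    intro p hp
    simp only [Finset.mem_filter, Finset.mem_univ, true_and, Finset.mem_union] at hp ⊢
    by_contra hcon
    push Not at hcon
    exact hp (hcon.1.trans hcon.2)
  exact_mod_cast (Finset.card_le_card this).trans (Finset.card_union_le _ _)

lemma card_ne_comm {α β : Type*} [Fintype α] (f g : α → β) :
    ((Finset.univ.filter (fun p => f p ≠ g p)).card : ℝ)
      = ((Finset.univ.filter (fun p => g p ≠ f p)).card : ℝ) := by
  simp only [ne_comm]

lemma badStep_count {F : Type*} [Field F] [Fintype F] (d : ℕ) (γ δ : ℝ) (g c : F × F → F)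
    (hc : c ∈ RM2 F d) (hδ : δ = 1 - (d : ℝ) / (Fintype.card F : ℝ)) (hδ34 : 3 / 4 ≤ δ)
    (hγ0 : 0 < γ) (hγ : γ ≤ δ / 8) :
    ((Finset.univ.filter (fun q : F × F × F × F => badStep d γ δ g c q)).card : ℝ)
      ≤ 2 / (Fintype.card F : ℝ) * (Fintype.card (F × F × F × F) : ℝ) := by
  set n : ℝ := (Fintype.card F : ℝ) with hn
  have hF : (0 : ℝ) < n := by rw [hn]; exact_mod_cast Fintype.card_pos
  have hcard : (Fintype.card (F × F × F × F) : ℝ) = n ^ 4 := by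
    simp only [Fintype.card_prod]; push_cast; rw [← hn]; ring
  have hδn : δ * n ^ 2 = n ^ 2 - d * n := by rw [hδ]; field_simp
  have hδ1 : δ ≤ 1 := by rw [hδ]; have : 0 ≤ (d : ℝ) / n := by positivity
                         linarith
  rw [hcard]
  have hrhs : 2 / n * n ^ 4 = 2 * n ^ 3 := by field_simp
  rw [hrhs]
  by_cases hex : ∃ P ∈ RM2 F d, ((Finset.univ.filter (fun p : F × F => g p ≠ P p)).card : ℝ)
      < 2 * γ * n ^ 2 ∧ P ≠ c
  · obtain ⟨P, hP, hclose, hPc⟩ := hex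
    -- uniqueness of the decoded codeword
    have huniq : ∀ P' ∈ RM2 F d,
        ((Finset.univ.filter (fun p : F × F => g p ≠ P' p)).card : ℝ) < 2 * γ * n ^ 2 →
        P' = P := by
      intro P' hP' hcl
      by_contra hne
      have h1 := rm2_dist hP' hP hne
      have h2 := card_ne_triangle P' g P
      rw [card_ne_comm P' g] at h2
      rw [← hn, ← hδn] at h1
      nlinarith [pow_pos hF 2]
    obtain ⟨α, hα⟩ : ∃ α : ℝ, ((Finset.univ.filter (fun p : F × F => g p ≠ P p)).card : ℝ)
        = α * n ^ 2 := ⟨_, (div_mul_cancel₀ _ (by positivity)).symm⟩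
    obtain ⟨β, hβ⟩ : ∃ β : ℝ, ((Finset.univ.filter (fun p : F × F => P p ≠ c p)).card : ℝ)
        = β * n ^ 2 := ⟨_, (div_mul_cancel₀ _ (by positivity)).symm⟩
    have hn2 : 0 < n ^ 2 := by positivity
    have hα0 : 0 ≤ α := by
      by_contra hneg
      push Not at hneg
      have : (0 : ℝ) ≤ α * n ^ 2 := by rw [← hα]; positivity
      nlinarith
    have hα2 : α < 2 * γ := by
      rw [hα] at hclose
      exact lt_of_mul_lt_mul_right hclose hn2.le
    have hβδ : δ ≤ β := by
      have h1 := rm2_dist hP hc hPc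
      rw [← hn, ← hδn, hβ] at h1
      exact le_of_mul_le_mul_right h1 hn2
    have hβ1 : β ≤ 1 := by
      have h1 : ((Finset.univ.filter (fun p : F × F => P p ≠ c p)).card : ℝ) ≤ 1 * n ^ 2 := by
        have := Finset.card_le_univ (Finset.univ.filter (fun p : F × F => P p ≠ c p))
        rw [Fintype.card_prod] at this
        rw [hn, one_mul, sq]
        exact_mod_cast this
      rw [hβ] at h1
      exact le_of_mul_le_mul_right h1 hn2
    have c1 := line_cheb (fun p => g p ≠ P p) α hα (δ / 2) (by linarith)
    have c2 := line_cheb (fun p => P p ≠ c p) β hβ β (by linarith)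
    rw [← hn] at c1 c2
    have hsub : (Finset.univ.filter (fun q : F × F × F × F => badStep d γ δ g c q)) ⊆
        (Finset.univ.filter (fun q : F × F × F × F =>
          (δ / 2 * n) ^ 2 ≤
          (((Finset.univ.filter (fun a : F => g (lpt q a) ≠ P (lpt q a))).card : ℝ)
            - α * n) ^ 2)) ∪
        (Finset.univ.filter (fun q : F × F × F × F =>
          (β * n) ^ 2 ≤
          (((Finset.univ.filter (fun a : F => P (lpt q a) ≠ c (lpt q a))).card : ℝ)
            - β * n) ^ 2)) := by
      intro q hq
      simp only [Finset.mem_filter, Finset.mem_univ, true_and, Finset.mem_union] at hq ⊢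
      obtain ⟨P', hP', hcl', _, hor⟩ := hq
      have := huniq P' hP' hcl'
      subst this
      rcases hor with h | h
      · right
        have h0 : (Finset.univ.filter (fun a : F => P' (lpt q a) ≠ c (lpt q a))).card = 0 := by
          rw [Finset.card_eq_zero, Finset.filter_eq_empty_iff]
          intro a _
          simp [h a]
        rw [h0]
        apply le_of_eq
        push_cast
        ring
      · left
        rw [← hn] at h
        apply pow_le_pow_left₀ (by nlinarith)
        nlinarith
    have hb : ((Finset.univ.filter (fun q : F × F × F × F => badStep d γ δ g c q)).card : ℝ)
        ≤ α * (1 - α) / (δ / 2) ^ 2 * n ^ 3 + β * (1 - β) / β ^ 2 * n ^ 3 := by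
      refine le_trans ?_ (add_le_add c1 c2)
      exact_mod_cast (Finset.card_le_card hsub).trans (Finset.card_union_le _ _)
    refine hb.trans ?_
    rw [← add_mul]
    apply mul_le_mul_of_nonneg_right _ (by positivity)
    have hA : α * (1 - α) / (δ / 2) ^ 2 ≤ 4 / 3 := by
      rw [div_le_iff₀ (by positivity)]
      nlinarith
    have hB : β * (1 - β) / β ^ 2 ≤ 1 / 3 := by
      have : 0 < β := by linarith
      rw [div_le_iff₀ (by positivity)]
      nlinarith
    linarith
  · have : (Finset.univ.filter (fun q : F × F × F × F => badStep d γ δ g c q)) = ∅ := by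
      rw [Finset.filter_eq_empty_iff]
      rintro q _ ⟨P, hP, h1, h2, _⟩
      exact hex ⟨P, hP, h1, h2⟩
    rw [this]
    simp only [Finset.card_empty, Nat.cast_zero]
    positivity

/-- The sample space. -/
abbrev Om (H F : Type*) (m : ℕ) : Type _ :=
  ((Fin m → H) × (Fin m → H)) × (Fin m → ((Fin m → H) × (F × F × F × F)))

/-- The point with parameters `ab` of the `i`-th plane. -/
def wpt {H F : Type*} [Field H] [Field F] [Algebra H F] {m : ℕ}
    (x : Fin m → F) (ω : Om H F m) (i : ℕ) (ab : F × F) : Fin m → F :=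
  walkX x ω.1.1 (cons0 ω.1.2 (fun j => (ω.2 j).1))
    (pad (fun j => (ω.2 j).2.1)) (pad (fun j => (ω.2 j).2.2.1))
    (pad (fun j => (ω.2 j).2.2.2.1)) (pad (fun j => (ω.2 j).2.2.2.2)) i
  + ab.1 • walkH ω.1.1 (cons0 ω.1.2 (fun j => (ω.2 j).1))
    (pad (fun j => (ω.2 j).2.2.2.1)) (pad (fun j => (ω.2 j).2.2.2.2)) i
  + ab.2 • iotaV (cons0 ω.1.2 (fun j => (ω.2 j).1) i)

lemma walkG_eq {H F : Type*} [Field H] [Field F] [Algebra H F] {m : ℕ}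
    (f : (Fin m → F) → F) (x : Fin m → F) (ω : Om H F m) (i : ℕ) :
    walkG f x ω.1.1 ω.1.2 ω.2 i = fun ab => f (wpt x ω i ab) := rfl

lemma wpt_zero {H F : Type*} [Field H] [Field F] [Algebra H F] {m : ℕ}
    (x : Fin m → F) (ω : Om H F m) : wpt x ω 0 (0, 0) = x := by
  simp [wpt, walkX]

lemma pad_fin {β : Type*} [Zero β] {n : ℕ} (f : Fin n → β) (i : Fin n) :
    pad f (i : ℕ) = f i := by simp [pad]

lemma wpt_succ {H F : Type*} [Field H] [Field F] [Algebra H F] {m : ℕ}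
    (x : Fin m → F) (ω : Om H F m) (i : Fin m) (a : F) :
    wpt x ω ((i : ℕ) + 1) (a, 0) = wpt x ω i (lpt (ω.2 i).2 a) := by
  simp only [wpt, walkX, walkH, lpt, pad_fin]
  funext j
  simp only [Pi.add_apply, Pi.smul_apply, smul_eq_mul]
  ring

lemma walkH_congr {H F : Type*} [Field H] [Field F] [Algebra H F] {m : ℕ}
    (h0 : Fin m → H) (h' : ℕ → Fin m → H) (t t' u u' : ℕ → F) (i : ℕ)
    (ht : ∀ j < i, t j = u j) (ht' : ∀ j < i, t' j = u' j) :
    walkH h0 h' t t' i = walkH h0 h' u u' i := by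
  induction i with
  | zero => rfl
  | succ i ih =>
    simp only [walkH]
    rw [ih (fun j hj => ht j (by omega)) (fun j hj => ht' j (by omega)),
      ht i (by omega), ht' i (by omega)]

lemma walkX_congr {H F : Type*} [Field H] [Field F] [Algebra H F] {m : ℕ}
    (x h0 h') (s s' t t' r r' u u' : ℕ → F) (i : ℕ)
    (hs : ∀ j < i, s j = r j) (hs' : ∀ j < i, s' j = r' j)
    (ht : ∀ j < i, t j = u j) (ht' : ∀ j < i, t' j = u' j) :
    (walkX x h0 h' s s' t t' i : Fin m → F) = walkX (H := H) x h0 h' r r' u u' i := by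
  induction i with
  | zero => rfl
  | succ i ih =>
    simp only [walkX]
    rw [ih (fun j hj => hs j (by omega)) (fun j hj => hs' j (by omega))
      (fun j hj => ht j (by omega)) (fun j hj => ht' j (by omega)),
      hs i (by omega), hs' i (by omega),
      walkH_congr h0 h' t t' u u' i (fun j hj => ht j (by omega)) (fun j hj => ht' j (by omega))]

/-- Translation of the parameters of step `i`. -/
def eStep {H F : Type*} [Field H] [Field F] {m : ℕ} (i : Fin m) (q : F × F × F × F) :
    Om H F m := (0, Pi.single i (0, q))

lemma wpt_eStep {H F : Type*} [Field H] [Field F] [Algebra H F] {m : ℕ}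
    (x : Fin m → F) (ω : Om H F m) (i : Fin m) (q : F × F × F × F) (ab : F × F) :
    wpt x (ω + eStep i q) i ab = wpt x ω i ab := by
  have hh : (fun j => ((ω + eStep i q).2 j).1) = fun j => (ω.2 j).1 := by
    funext j
    by_cases hj : j = i
    · subst hj; simp [eStep]
    · simp [eStep, hj]
  have h1 : (ω + eStep i q).1 = ω.1 := by simp [eStep]
  have hlt : ∀ j < (i : ℕ), ∀ hj : j < m, (ω + eStep i q).2 ⟨j, hj⟩ = ω.2 ⟨j, hj⟩ := by
    intro j hji hj
    have : (⟨j, hj⟩ : Fin m) ≠ i := by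
      intro h; rw [← h] at hji; simp at hji
    simp [eStep, this]
  have hp : ∀ (φ : ((Fin m → H) × (F × F × F × F)) → F), ∀ j < (i : ℕ),
      pad (fun j => φ ((ω + eStep i q).2 j)) j = pad (fun j => φ (ω.2 j)) j := by
    intro φ j hj
    simp only [pad]
    split_ifs with hjm
    · rw [hlt j hj hjm]
    · rfl
  simp only [wpt]
  rw [hh, h1]
  rw [walkX_congr x _ _ _ _ _ _ _ _ _ _ i (hp fun z => z.2.1) (hp fun z => z.2.2.1)
      (hp fun z => z.2.2.2.1) (hp fun z => z.2.2.2.2),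
    walkH_congr _ _ _ _ _ _ i (hp fun z => z.2.2.2.1) (hp fun z => z.2.2.2.2)]

lemma step_eStep {H F : Type*} [Field H] [Field F] {m : ℕ}
    (ω : Om H F m) (i : Fin m) (q : F × F × F × F) :
    ((ω + eStep i q).2 i).2 = (ω.2 i).2 + q := by
  simp [eStep]

/-- Translation of the primed step parameters. -/
def eS {H F : Type*} [Field H] [Field F] {m : ℕ} (q : Fin m → F) : Om H F m :=
  (0, fun i => (0, 0, q i, 0, 0))

lemma walkX_shift {H F : Type*} [Field H] [Field F] [Algebra H F] {m : ℕ}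
    (x h0 h') (s s' t t' : ℕ → F) (q : ℕ → F) (i : ℕ) :
    (walkX (H := H) x h0 h' s (fun j => s' j + q j) t t' i : Fin m → F)
      = walkX (H := H) x h0 h' s s' t t' i + ∑ j ∈ Finset.range i, q j • iotaV (h' j) := by
  induction i with
  | zero => simp [walkX]
  | succ i ih =>
    simp only [walkX]
    rw [ih, Finset.sum_range_succ, add_smul]
    abel

lemma wpt_eS {H F : Type*} [Field H] [Field F] [Algebra H F] {m : ℕ}
    (x : Fin m → F) (ω : Om H F m) (q : Fin m → F) (ab : F × F) :
    wpt x (ω + eS q) m ab = wpt x ω m ab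
      + ∑ j : Fin m, q j • iotaV (cons0 ω.1.2 (fun j => (ω.2 j).1) (j : ℕ)) := by
  have h1 : (ω + eS q).1 = ω.1 := by simp [eS]
  have hh : (fun j => ((ω + eS q).2 j).1) = fun j => (ω.2 j).1 := by
    funext j; simp [eS]
  have a1 : (fun j => ((ω + eS q).2 j).2.1) = fun j => (ω.2 j).2.1 := by
    funext j; simp [eS]
  have a2 : pad (fun j => ((ω + eS q).2 j).2.2.1)
      = fun j => pad (fun j => (ω.2 j).2.2.1) j + pad q j := by
    funext j
    simp only [pad]
    split_ifs
    · simp [eS]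
    · simp
  have a3 : (fun j => ((ω + eS q).2 j).2.2.2.1) = fun j => (ω.2 j).2.2.2.1 := by
    funext j; simp [eS]
  have a4 : (fun j => ((ω + eS q).2 j).2.2.2.2) = fun j => (ω.2 j).2.2.2.2 := by
    funext j; simp [eS]
  simp only [wpt]
  rw [h1, hh, a1, a2, a3, a4, walkX_shift, Finset.sum_range]
  simp only [pad_fin]
  abel

/-- The first m sampled primed directions. -/
def dirs {H F : Type*} [Field H] [Field F] {m : ℕ} (ω : Om H F m) (j : Fin m) : Fin m → H :=
  cons0 ω.1.2 (fun j => (ω.2 j).1) (j : ℕ)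

/-- Translation of the first `m` directions. -/
def eD {H F : Type*} [Field H] [Field F] {m : ℕ} (hm : 0 < m) (q : Fin m → Fin m → H) :
    Om H F m :=
  ((0, q ⟨0, hm⟩), fun i => (if h : (i : ℕ) + 1 < m then q ⟨(i : ℕ) + 1, h⟩ else 0, 0))

lemma dirs_eD {H F : Type*} [Field H] [Field F] {m : ℕ} (hm : 0 < m)
    (ω : Om H F m) (q : Fin m → Fin m → H) : dirs (ω + eD hm q) = dirs ω + q := by
  funext ⟨j, hj⟩
  cases j with
  | zero => simp [dirs, cons0, eD]
  | succ j =>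
    have : j < m := by omega
    simp [dirs, cons0, eD, pad, this, hj]

lemma dirs_eS {H F : Type*} [Field H] [Field F] {m : ℕ}
    (ω : Om H F m) (q : Fin m → F) : dirs (ω + eS q) = dirs ω := by
  funext ⟨j, hj⟩
  cases j with
  | zero => simp [dirs, cons0, eS]
  | succ j => simp [dirs, cons0, eS, pad]

/-- Independent directions give an injective parametrization. -/
lemma dirs_inj {H F : Type*} [Field H] [Field F] [Algebra H F] {m : ℕ}
    (h : Fin m → Fin m → H) (hli : LinearIndependent H h) :
    Function.Injective (fun q : Fin m → F => ∑ j : Fin m, q j • iotaV (F := F) (h j)) := by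
  have hu : IsUnit (Matrix.of h) := Matrix.linearIndependent_rows_iff_isUnit.mp hli
  have hu' : IsUnit ((Matrix.of h).map (algebraMap H F)) := hu.map (algebraMap H F).mapMatrix
  have hinj := Matrix.vecMul_injective_of_isUnit hu'
  intro q q' hqq
  apply hinj
  funext k
  have := congrFun hqq k
  simpa [Matrix.vecMul, dotProduct, iotaV, Finset.sum_apply] using this

lemma prod_one_sub_ge (f : ℕ → ℝ) (k : ℕ) (h0 : ∀ i < k, 0 ≤ f i) (h1 : ∀ i < k, f i ≤ 1) :
    1 - ∑ i ∈ Finset.range k, f i ≤ ∏ i ∈ Finset.range k, (1 - f i)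
      ∧ 0 ≤ ∏ i ∈ Finset.range k, (1 - f i) ∧ ∏ i ∈ Finset.range k, (1 - f i) ≤ 1 := by
  induction k with
  | zero => simp
  | succ k ih =>
    obtain ⟨a, b, c⟩ := ih (fun i hi => h0 i (by omega)) (fun i hi => h1 i (by omega))
    rw [Finset.sum_range_succ, Finset.prod_range_succ]
    have := h0 k (by omega)
    have := h1 k (by omega)
    refine ⟨?_, ?_, ?_⟩ <;> nlinarith

/-- Few families of vectors are dependent. -/
lemma sing_count {H : Type*} [Field H] [Fintype H] (m : ℕ) :
    ((Finset.univ.filter (fun h : Fin m → Fin m → H => ¬ LinearIndependent H h)).card : ℝ)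
      ≤ 2 / (Fintype.card H : ℝ) * (Fintype.card (Fin m → Fin m → H) : ℝ) := by
  have hc := card_linearIndependent (K := H) (V := Fin m → H) (k := m) (by simp)
  rw [Nat.card_eq_fintype_card, Fintype.card_subtype] at hc
  simp only [Module.finrank_fintype_fun_eq_card, Fintype.card_fin] at hc
  have hsum := Finset.card_filter_add_card_filter_not
    (s := (Finset.univ : Finset (Fin m → Fin m → H))) (fun h => LinearIndependent H h)
  rw [Finset.card_univ] at hsum
  set q := Fintype.card H with hq
  have hq2 : 2 ≤ q := Fintype.one_lt_card
  have hq2R : (2 : ℝ) ≤ q := by exact_mod_cast hq2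
  have hN : (Fintype.card (Fin m → Fin m → H) : ℝ) = ((q : ℝ) ^ m) ^ m := by
    simp [hq]
  have hqm : (0 : ℝ) < (q : ℝ) ^ m := by positivity
  have hprod : ((Finset.univ.filter
      (fun h : Fin m → Fin m → H => LinearIndependent H h)).card : ℝ)
      = ((q : ℝ) ^ m) ^ m * ∏ i ∈ Finset.range m, (1 - (q : ℝ) ^ i / (q : ℝ) ^ m) := by
    rw [hc, ← Finset.prod_range (fun i => q ^ m - q ^ i), Nat.cast_prod]
    have e : ((q : ℝ) ^ m) ^ m = ∏ i ∈ Finset.range m, (q : ℝ) ^ m := by simp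
    rw [e, ← Finset.prod_mul_distrib]
    refine Finset.prod_congr rfl fun i hi => ?_
    rw [Nat.cast_sub (Nat.pow_le_pow_right (by omega) (Finset.mem_range.mp hi).le)]
    push_cast
    field_simp
  have hge := (prod_one_sub_ge (fun i => (q : ℝ) ^ i / (q : ℝ) ^ m) m
    (fun i _ => by positivity) (fun i hi => by
      rw [div_le_one hqm]
      exact pow_le_pow_right₀ (by linarith) hi.le)).1
  have hgeo : ∑ i ∈ Finset.range m, (q : ℝ) ^ i / (q : ℝ) ^ m ≤ 2 / q := by
    rw [← Finset.sum_div, geom_sum_eq (by linarith), div_div,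
      div_le_div_iff₀ (mul_pos (by linarith) hqm) (by linarith)]
    nlinarith
  have hsumR : ((Finset.univ.filter
      (fun h : Fin m → Fin m → H => LinearIndependent H h)).card : ℝ) +
      ((Finset.univ.filter (fun h : Fin m → Fin m → H => ¬ LinearIndependent H h)).card : ℝ)
      = (Fintype.card (Fin m → Fin m → H) : ℝ) := by exact_mod_cast hsum
  rw [hN] at hsumR ⊢
  have hpos : 0 < ((q : ℝ) ^ m) ^ m := by positivity
  nlinarith [mul_le_mul_of_nonneg_left (le_trans (sub_le_sub_left hgeo 1) hge) hpos.le]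

/-- The set of samples for which step `i` is bad is small. -/
lemma bad_count {H F : Type*} [Field H] [Fintype H] [Field F] [Fintype F]
    [Algebra H F] {m d : ℕ} (γ δ : ℝ) (hδ : δ = 1 - (d : ℝ) / (Fintype.card F : ℝ))
    (hδ34 : 3 / 4 ≤ δ) (hγ0 : 0 < γ) (hγ : γ ≤ δ / 8)
    (f : (Fin m → F) → F) (Q : MvPolynomial (Fin m) F) (hQ : Q.totalDegree ≤ d)
    (x : Fin m → F) (i : Fin m) :
    ((Finset.univ.filter (fun ω : Om H F m =>
      badStep d γ δ (fun ab => f (wpt x ω i ab))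
        (fun ab => MvPolynomial.eval (wpt x ω i ab) Q) (ω.2 i).2)).card : ℝ)
      ≤ 2 / (Fintype.card F : ℝ) * (Fintype.card (Om H F m) : ℝ) := by
  apply count_translate (Q := F × F × F × F) (eStep i)
  intro ω
  simp only [wpt_eStep, step_eStep]
  refine le_trans (le_of_eq ?_) (badStep_count d γ δ (fun ab => f (wpt x ω i ab))
    (fun ab => MvPolynomial.eval (wpt x ω i ab) Q) (plane_rm2 Q hQ _ _ _) hδ hδ34 hγ0 hγ)
  congr 1
  apply Finset.card_equiv (Equiv.addLeft (ω.2 i).2)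
  intro q
  simp

lemma unif_count {H F : Type*} [Field H] [Fintype H] [Field F] [Fintype F]
    [Algebra H F] {m : ℕ} (τ : ℝ) (hτ0 : 0 ≤ τ) (E : (Fin m → F) → Prop) [DecidablePred E]
    (hE : ((Finset.univ.filter (fun y : Fin m → F => E y)).card : ℝ)
      ≤ τ * (Fintype.card F : ℝ) ^ m) (x : Fin m → F) (ab : F × F) :
    ((Finset.univ.filter (fun ω : Om H F m =>
      LinearIndependent H (dirs ω) ∧ E (wpt x ω m ab))).card : ℝ)
      ≤ τ * (Fintype.card (Om H F m) : ℝ) := by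
  apply count_translate (Q := Fin m → F) eS
  intro ω
  have hcard : (Fintype.card (Fin m → F) : ℝ) = (Fintype.card F : ℝ) ^ m := by simp
  rw [hcard]
  simp only [dirs_eS, wpt_eS]
  by_cases hli : LinearIndependent H (dirs ω)
  · refine le_trans ?_ hE
    have hinj := dirs_inj (F := F) (dirs ω) hli
    exact_mod_cast Finset.card_le_card_of_injOn
      (fun q : Fin m → F => wpt x ω m ab + ∑ j : Fin m, q j • iotaV (F := F) (dirs ω j))
      (by
        intro q hq
        simp only [Finset.coe_filter, Finset.mem_univ, true_and, Set.mem_ofPred_eq] at hq ⊢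
        exact hq.2)
      (by
        intro q _ q' _ h
        exact hinj (add_left_cancel h))
  · simp only [hli, false_and, Finset.filter_false, Finset.card_empty, Nat.cast_zero]
    positivity

lemma dep_count {H F : Type*} [Field H] [Fintype H] [Field F] [Fintype F] {m : ℕ} (hm : 0 < m) :
    ((Finset.univ.filter (fun ω : Om H F m => ¬ LinearIndependent H (dirs ω))).card : ℝ)
      ≤ 2 / (Fintype.card H : ℝ) * (Fintype.card (Om H F m) : ℝ) := by
  apply count_translate (Q := Fin m → Fin m → H) (eD hm)
  intro ω
  simp only [dirs_eD]
  refine le_trans (le_of_eq ?_) (sing_count m)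
  congr 1
  apply Finset.card_equiv (Equiv.addLeft (dirs ω))
  intro q
  simp

/-- Markov bound for the last plane. -/
lemma last_count {H F : Type*} [Field H] [Fintype H] [Field F] [Fintype F]
    [Algebra H F] {m : ℕ} (hm : 0 < m) (τ ρ : ℝ) (hτ0 : 0 ≤ τ) (hρ : 0 < ρ)
    (E : (Fin m → F) → Prop) [DecidablePred E]
    (hE : ((Finset.univ.filter (fun y : Fin m → F => E y)).card : ℝ)
      ≤ τ * (Fintype.card F : ℝ) ^ m) (x : Fin m → F) :
    ((Finset.univ.filter (fun ω : Om H F m => ρ * (Fintype.card F : ℝ) ^ 2 ≤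
      ((Finset.univ.filter (fun ab : F × F => E (wpt x ω m ab))).card : ℝ))).card : ℝ)
      ≤ (τ + 2 / (Fintype.card H : ℝ)) / ρ * (Fintype.card (Om H F m) : ℝ) := by
  set N : ℝ := (Fintype.card (Om H F m) : ℝ)
  have hF : (0 : ℝ) < Fintype.card F := by exact_mod_cast Fintype.card_pos
  set S := Finset.univ.filter (fun ω : Om H F m => ρ * (Fintype.card F : ℝ) ^ 2 ≤
      ((Finset.univ.filter (fun ab : F × F => E (wpt x ω m ab))).card : ℝ))
  have h1 : (S.card : ℝ) * (ρ * (Fintype.card F : ℝ) ^ 2) ≤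
      ∑ ω : Om H F m, ((Finset.univ.filter (fun ab : F × F => E (wpt x ω m ab))).card : ℝ) := by
    rw [← nsmul_eq_mul]
    refine (Finset.card_nsmul_le_sum S _ _ ?_).trans
      (Finset.sum_le_sum_of_subset_of_nonneg (Finset.subset_univ S) ?_)
    · intro ω hω
      exact (Finset.mem_filter.mp hω).2
    · intro q _ _
      positivity
  have h2 : ∑ ω : Om H F m, ((Finset.univ.filter (fun ab : F × F => E (wpt x ω m ab))).card : ℝ)
      = ∑ ab : F × F, ((Finset.univ.filter (fun ω : Om H F m => E (wpt x ω m ab))).card : ℝ) := by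
    simp only [Finset.card_filter, Nat.cast_sum]
    rw [Finset.sum_comm]
  have h3 : ∀ ab : F × F, ((Finset.univ.filter (fun ω : Om H F m => E (wpt x ω m ab))).card : ℝ)
      ≤ (τ + 2 / (Fintype.card H : ℝ)) * N := by
    intro ab
    have a := unif_count (H := H) τ hτ0 E hE x ab
    have b := dep_count (H := H) (F := F) hm
    rw [add_mul]
    refine le_trans ?_ (add_le_add a b)
    have hsub : (Finset.univ.filter (fun ω : Om H F m => E (wpt x ω m ab))) ⊆
        (Finset.univ.filter (fun ω : Om H F m =>
          LinearIndependent H (dirs ω) ∧ E (wpt x ω m ab))) ∪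
        (Finset.univ.filter (fun ω : Om H F m => ¬ LinearIndependent H (dirs ω))) := by
      intro ω hω
      simp only [Finset.mem_filter, Finset.mem_univ, true_and, Finset.mem_union] at hω ⊢
      tauto
    exact_mod_cast (Finset.card_le_card hsub).trans (Finset.card_union_le _ _)
  have h4 := Finset.sum_le_sum (fun (ab : F × F) (_ : ab ∈ Finset.univ) => h3 ab)
  simp only [Finset.sum_const, Finset.card_univ, Fintype.card_prod, nsmul_eq_mul] at h4
  push_cast at h4
  rw [← h2] at h4
  have h5 := h1.trans h4
  rw [div_mul_eq_mul_div, le_div_iff₀ hρ]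
  have h6 : ((S.card : ℝ) * ρ) * (Fintype.card F : ℝ) ^ 2
      ≤ ((τ + 2 / (Fintype.card H : ℝ)) * N) * (Fintype.card F : ℝ) ^ 2 := by
    nlinarith
  exact le_of_mul_le_mul_right h6 (by positivity)

lemma zero_mem_RM2 (F : Type*) [CommSemiring F] (d : ℕ) : (fun _ => 0) ∈ RM2 F d :=
  ⟨0, by simp, by simp⟩

lemma pow_bound (m : ℕ) (n : ℝ) (hn : 4 * m ≤ n) (hn4 : 4 ≤ n) :
    (1 - 4 / n) ^ m ≤ 1 - m * (2 / n) := by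
  have hn0 : 0 < n := by linarith
  set y : ℝ := 4 / n with hy
  have hy0 : 0 ≤ y := by positivity
  have hy1 : y ≤ 1 := by rw [hy, div_le_one hn0]; exact hn4
  have hmy : m * y ≤ 1 := by
    rw [hy, ← mul_div_assoc, div_le_one hn0]; linarith
  have hmy0 : 0 ≤ m * y := by positivity
  have e : (m : ℝ) * (2 / n) = m * y / 2 := by rw [hy]; ring
  rw [e]
  have hb := one_add_mul_le_pow (by linarith : (-2 : ℝ) ≤ y) m
  have hp : (1 - y) ^ m * (1 + y) ^ m ≤ 1 := by
    rw [← mul_pow]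
    exact pow_le_one₀ (by nlinarith) (by nlinarith)
  have hp0 : 0 ≤ (1 - y) ^ m := pow_nonneg (by linarith) m
  have h1 : (1 - y) ^ m * (1 + m * y) ≤ 1 :=
    (mul_le_mul_of_nonneg_left hb hp0).trans hp
  have h2 : 1 ≤ (1 - m * y / 2) * (1 + m * y) := by nlinarith
  exact le_of_mul_le_mul_right (h1.trans h2) (by linarith)

/-- The deterministic part: if all tests pass, then a step is bad or the last plane is bad. -/
lemma chain {H F : Type*} [Field H] [Field F] [Fintype F]
    [Algebra H F] {m d : ℕ} (γ δ : ℝ) (hδ : δ = 1 - (d : ℝ) / (Fintype.card F : ℝ))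
    (f : (Fin m → F) → F) (Q : MvPolynomial (Fin m) F) (hQ : Q.totalDegree ≤ d)
    (x : Fin m → F) (hx : f x ≠ MvPolynomial.eval x Q) (ω : Om H F m)
    (P : ℕ → F × F → F) (hP : ∀ i, i ≤ m → P i ∈ RM2 F d)
    (hclose : ∀ i, i ≤ m → ((Finset.univ.filter
      (fun p : F × F => f (wpt x ω i p) ≠ P i p)).card : ℝ) < 2 * γ * (Fintype.card F : ℝ) ^ 2)
    (h0 : f (wpt x ω 0 (0, 0)) = P 0 (0, 0))
    (hline : ∀ i, 1 ≤ i → i ≤ m → ((Finset.univ.filter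
      (fun a : F => f (wpt x ω i (a, 0)) ≠ P i (a, 0))).card : ℝ)
        < 2 * γ * (Fintype.card F : ℝ))
    (hgood : ∀ i : Fin m, ¬ badStep d γ δ (fun ab => f (wpt x ω i ab))
        (fun ab => MvPolynomial.eval (wpt x ω i ab) Q) (ω.2 i).2) :
    (δ - 2 * γ) * (Fintype.card F : ℝ) ^ 2 ≤
      ((Finset.univ.filter (fun ab : F × F =>
        f (wpt x ω m ab) ≠ MvPolynomial.eval (wpt x ω m ab) Q)).card : ℝ) := by
  have hF : (0 : ℝ) < Fintype.card F := by exact_mod_cast Fintype.card_pos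
  have hδn : δ * (Fintype.card F : ℝ) = (Fintype.card F : ℝ) - d := by rw [hδ]; field_simp
  have key : ∀ i, i ≤ m → P i ≠ fun ab => MvPolynomial.eval (wpt x ω i ab) Q := by
    intro i
    induction i with
    | zero =>
      intro _ h
      have := congrFun h (0, 0)
      rw [← h0, wpt_zero] at this
      exact hx this
    | succ i ih =>
      intro hi hcon
      have hne := ih (by omega)
      have hg := hgood ⟨i, by omega⟩
      set q := (ω.2 ⟨i, by omega⟩).2 with hq
      have hw : ∀ a, wpt x ω (i + 1) (a, 0) = wpt x ω i (lpt q a) := fun a =>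
        wpt_succ x ω ⟨i, by omega⟩ a
      have hg2 : ¬ ((∀ a, P i (lpt q a) = MvPolynomial.eval (wpt x ω i (lpt q a)) Q) ∨
          (δ - 2 * γ) * (Fintype.card F : ℝ) ≤
          ((Finset.univ.filter (fun a : F =>
            f (wpt x ω i (lpt q a)) ≠ P i (lpt q a))).card : ℝ)) := by
        intro hor
        exact hg ⟨P i, hP i (by omega), hclose i (by omega), hne, hor⟩
      push Not at hg2
      obtain ⟨⟨a, ha⟩, hlt⟩ := hg2
      apply ha
      obtain ⟨p1, hp1, hp1e⟩ := rm2_line (hP i (by omega)) q.1 q.2.1 q.2.2.1 q.2.2.2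
      obtain ⟨p2, hp2, hp2e⟩ := rm2_line (hP (i + 1) hi) 0 0 1 0
      have e1 : ∀ a, p1.eval a = P i (lpt q a) := fun a => (hp1e a).symm
      have e2 : ∀ a, p2.eval a = P (i + 1) (a, 0) := fun a => by
        rw [← hp2e a]; simp
      have hl := hline (i + 1) (by omega) hi
      simp only [hw] at hl
      have htri := card_ne_triangle (fun a => P i (lpt q a)) (fun a => f (wpt x ω i (lpt q a)))
        (fun a => P (i + 1) (a, 0))
      rw [card_ne_comm (fun a => P i (lpt q a)) (fun a => f (wpt x ω i (lpt q a)))] at htri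
      have heq : p1 = p2 := by
        apply uni_eq hp1 hp2
        simp only [e1, e2]
        linarith
      rw [← e1, heq, e2, hcon]
      simp only [hw]
  have hcm : (fun ab : F × F => MvPolynomial.eval (wpt x ω m ab) Q) ∈ RM2 F d :=
    plane_rm2 Q hQ _ _ _
  have h1 := rm2_dist (hP m le_rfl) hcm (key m le_rfl)
  have h2 := card_ne_triangle (P m) (fun ab => f (wpt x ω m ab))
    (fun ab => MvPolynomial.eval (wpt x ω m ab) Q)
  rw [card_ne_comm (P m) (fun ab => f (wpt x ω m ab))] at h2
  have h3 := hclose m le_rfl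
  have h4 : δ * (Fintype.card F : ℝ) ^ 2 = (Fintype.card F : ℝ) ^ 2 - d * Fintype.card F := by
    linear_combination (Fintype.card F : ℝ) * hδn
  linarith

/-- **Theorem 4.2 (robust soundness of the `H`-plane-line consistency test).**
Let `d, m ≥ 2`, `H` a finite field, `F` an extension of degree `m` with `|F| ≥ 2md`,
`n = |F|`, `δ = 1 − d/n`, `0 ≤ τ ≤ δ/2` and `0 < γ ≤ δ/8`.  Suppose `f : F^m → F`
agrees with the evaluation of a degree-`≤ d` polynomial `Q*` except on at most `τ·n^m`
points, and `f(x) ≠ Q*(x)`.  Run the `m`-step `H`-plane-line random walk from `x`.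
Then with probability at least `(1 − 4/n)^m − (τ + 2/|H|)/(δ − 2γ)` over the sample
space `(H^m)² × ((H^m) × F⁴)^m`, either the point-weighted distance of `g₀` from the
bivariate Reed–Muller code is at least `γ`, or for some `i ∈ {1, …, m}` the
line-weighted distance of `g_i` from the bivariate Reed–Muller code is at least `γ`. -/
theorem ctrw_robust_soundness (H F : Type*) [Field H] [Fintype H] [Field F] [Fintype F]
    [Algebra H F] (m d : ℕ) (hm : 2 ≤ m) (hd : 2 ≤ d)
    (hrank : Module.finrank H F = m)
    (n : ℕ) (hn : n = Fintype.card F) (hnbig : 2 * m * d ≤ n)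
    (δ : ℝ) (hδ : δ = 1 - (d : ℝ) / (n : ℝ))
    (τ γ : ℝ) (hτ0 : 0 ≤ τ) (hτ : τ ≤ δ / 2) (hγ0 : 0 < γ) (hγ : γ ≤ δ / 8)
    (f : (Fin m → F) → F) (Qstar : MvPolynomial (Fin m) F) (hQd : Qstar.totalDegree ≤ d)
    (hclose : ((Finset.univ.filter
        (fun y : Fin m → F => f y ≠ MvPolynomial.eval y Qstar)).card : ℝ) ≤ τ * (n : ℝ) ^ m)
    (x : Fin m → F) (hx : f x ≠ MvPolynomial.eval x Qstar) :
    (((1 : ℝ) - 4 / (n : ℝ)) ^ m - (τ + 2 / (Fintype.card H : ℝ)) / (δ - 2 * γ))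
        * (Fintype.card
            (((Fin m → H) × (Fin m → H)) × (Fin m → ((Fin m → H) × (F × F × F × F)))) : ℝ)
      ≤ ((Finset.univ.filter
          (fun ω : ((Fin m → H) × (Fin m → H)) × (Fin m → ((Fin m → H) × (F × F × F × F))) =>
            (γ ≤ sInf {r : ℝ | ∃ g ∈ RM2 F d,
                r = (1 / 2) * (if walkG f x ω.1.1 ω.1.2 ω.2 0 (0, 0) ≠ g (0, 0)
                                then (1 : ℝ) else 0)
                  + ((Finset.univ.filter (fun p : F × F =>
                        walkG f x ω.1.1 ω.1.2 ω.2 0 p ≠ g p)).card : ℝ) / (2 * (n : ℝ) ^ 2)})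
            ∨ ∃ i : ℕ, 1 ≤ i ∧ i ≤ m ∧
                γ ≤ sInf {r : ℝ | ∃ g ∈ RM2 F d,
                  r = ((Finset.univ.filter (fun a : F =>
                          walkG f x ω.1.1 ω.1.2 ω.2 i (a, 0) ≠ g (a, 0))).card : ℝ)
                        / (2 * (n : ℝ))
                    + ((Finset.univ.filter (fun p : F × F =>
                          walkG f x ω.1.1 ω.1.2 ω.2 i p ≠ g p)).card : ℝ)
                        / (2 * (n : ℝ) ^ 2)})).card : ℝ) := by
  subst hn
  have hFpos : (0 : ℝ) < (Fintype.card F : ℝ) := by exact_mod_cast Fintype.card_pos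
  have hbig : 2 * (m : ℝ) * d ≤ Fintype.card F := by exact_mod_cast hnbig
  have hmR : (2 : ℝ) ≤ m := by exact_mod_cast hm
  have hdR : (2 : ℝ) ≤ d := by exact_mod_cast hd
  have h4m : 4 * (m : ℝ) ≤ Fintype.card F := by nlinarith
  have hδ34 : 3 / 4 ≤ δ := by
    have : (d : ℝ) / (Fintype.card F : ℝ) ≤ 1 / 4 := by
      rw [div_le_div_iff₀ hFpos (by norm_num)]; nlinarith
    linarith
  have hδ1 : δ ≤ 1 := by
    have : 0 ≤ (d : ℝ) / (Fintype.card F : ℝ) := by positivity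
    linarith
  have hρ : 0 < δ - 2 * γ := by linarith
  have hpow := pow_bound m (Fintype.card F : ℝ) h4m (by linarith)
  set N : ℝ := (Fintype.card (Om H F m) : ℝ) with hN
  set G := Finset.univ.filter
          (fun ω : ((Fin m → H) × (Fin m → H)) × (Fin m → ((Fin m → H) × (F × F × F × F))) =>
            (γ ≤ sInf {r : ℝ | ∃ g ∈ RM2 F d,
                r = (1 / 2) * (if walkG f x ω.1.1 ω.1.2 ω.2 0 (0, 0) ≠ g (0, 0)
                                then (1 : ℝ) else 0)
                  + ((Finset.univ.filter (fun p : F × F =>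
                        walkG f x ω.1.1 ω.1.2 ω.2 0 p ≠ g p)).card : ℝ)
                          / (2 * (Fintype.card F : ℝ) ^ 2)})
            ∨ ∃ i : ℕ, 1 ≤ i ∧ i ≤ m ∧
                γ ≤ sInf {r : ℝ | ∃ g ∈ RM2 F d,
                  r = ((Finset.univ.filter (fun a : F =>
                          walkG f x ω.1.1 ω.1.2 ω.2 i (a, 0) ≠ g (a, 0))).card : ℝ)
                        / (2 * (Fintype.card F : ℝ))
                    + ((Finset.univ.filter (fun p : F × F =>
                          walkG f x ω.1.1 ω.1.2 ω.2 i p ≠ g p)).card : ℝ)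
                        / (2 * (Fintype.card F : ℝ) ^ 2)}) with hG
  set B : Fin m → Finset (Om H F m) := fun i => Finset.univ.filter (fun ω : Om H F m =>
      badStep d γ δ (fun ab => f (wpt x ω i ab))
        (fun ab => MvPolynomial.eval (wpt x ω i ab) Qstar) (ω.2 i).2) with hB
  set L : Finset (Om H F m) := Finset.univ.filter (fun ω : Om H F m =>
      (δ - 2 * γ) * (Fintype.card F : ℝ) ^ 2 ≤
      ((Finset.univ.filter (fun ab : F × F =>
        f (wpt x ω m ab) ≠ MvPolynomial.eval (wpt x ω m ab) Qstar)).card : ℝ)) with hL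
  have hLc : (L.card : ℝ) ≤ (τ + 2 / (Fintype.card H : ℝ)) / (δ - 2 * γ) * N :=
    last_count (H := H) (by omega) τ (δ - 2 * γ) hτ0 hρ
      (fun y => f y ≠ MvPolynomial.eval y Qstar) hclose x
  have hBc : ∀ i, ((B i).card : ℝ) ≤ 2 / (Fintype.card F : ℝ) * N := fun i =>
    bad_count γ δ hδ hδ34 hγ0 hγ f Qstar hQd x i
  have hcover : (Finset.univ : Finset (Om H F m)) ⊆ (G ∪ Finset.univ.biUnion B) ∪ L := by
    intro ω _
    by_contra hcon
    simp only [Finset.mem_union, Finset.mem_biUnion, Finset.mem_univ, true_and, not_or,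
      not_exists] at hcon
    obtain ⟨⟨hωG, hωB⟩, hωL⟩ := hcon
    have hωG' := fun h => hωG (Finset.mem_filter.mpr ⟨Finset.mem_univ _, h⟩)
    obtain ⟨hG0, hGi⟩ := not_or.mp hωG'
    push Not at hG0 hGi
    have hex0 := exists_lt_of_csInf_lt (by exact ⟨_, ⟨_, zero_mem_RM2 F d, rfl⟩⟩) hG0
    have hall : ∀ i, ∃ g : F × F → F, i ≤ m → (g ∈ RM2 F d ∧
        ((Finset.univ.filter (fun p : F × F => f (wpt x ω i p) ≠ g p)).card : ℝ)
          < 2 * γ * (Fintype.card F : ℝ) ^ 2 ∧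
        (i = 0 → f (wpt x ω 0 (0, 0)) = g (0, 0)) ∧
        (1 ≤ i → ((Finset.univ.filter
          (fun a : F => f (wpt x ω i (a, 0)) ≠ g (a, 0))).card : ℝ)
            < 2 * γ * (Fintype.card F : ℝ))) := by
      intro i
      rcases Nat.eq_zero_or_pos i with rfl | hi
      · obtain ⟨r, ⟨g, hg, hr⟩, hrγ⟩ := hex0
        refine ⟨g, fun _ => ⟨hg, ?_, ?_, fun h => absurd h (by omega)⟩⟩
        · rw [hr] at hrγ
          have hpos : (0 : ℝ) ≤ (1 / 2) * (if walkG f x ω.1.1 ω.1.2 ω.2 0 (0, 0) ≠ g (0, 0)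
                                then (1 : ℝ) else 0) := by split_ifs <;> norm_num
          have h2 := lt_of_le_of_lt (le_add_of_nonneg_left hpos) hrγ
          rw [div_lt_iff₀ (by positivity)] at h2
          rw [walkG_eq] at h2
          linarith
        · intro _
          by_contra hne
          have hne' : walkG f x ω.1.1 ω.1.2 ω.2 0 (0, 0) ≠ g (0, 0) := hne
          rw [hr, if_pos hne'] at hrγ
          have hpos : (0 : ℝ) ≤ ((Finset.univ.filter (fun p : F × F =>
                        walkG f x ω.1.1 ω.1.2 ω.2 0 p ≠ g p)).card : ℝ)
                          / (2 * (Fintype.card F : ℝ) ^ 2) := by positivity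
          linarith
      · by_cases him : i ≤ m
        · obtain ⟨r, ⟨g, hg, hr⟩, hrγ⟩ :=
            exists_lt_of_csInf_lt (by exact ⟨_, ⟨_, zero_mem_RM2 F d, rfl⟩⟩) (hGi i hi him)
          refine ⟨g, fun _ => ⟨hg, ?_, fun h => absurd h (by omega), fun _ => ?_⟩⟩
          · rw [hr] at hrγ
            have h2 := lt_of_le_of_lt (le_add_of_nonneg_left (by positivity)) hrγ
            rw [div_lt_iff₀ (by positivity)] at h2
            rw [walkG_eq] at h2
            linarith
          · rw [hr] at hrγ
            have h2 := lt_of_le_of_lt (le_add_of_nonneg_right (by positivity)) hrγ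
            rw [div_lt_iff₀ (by positivity)] at h2
            rw [walkG_eq] at h2
            linarith
        · exact ⟨0, fun h => absurd h him⟩
    choose P hP using hall
    apply hωL
    rw [hL, Finset.mem_filter]
    refine ⟨Finset.mem_univ _, ?_⟩
    exact chain γ δ hδ f Qstar hQd x hx ω P (fun i hi => (hP i hi).1)
      (fun i hi => (hP i hi).2.1) ((hP 0 (by omega)).2.2.1 rfl)
      (fun i h1 hi => (hP i hi).2.2.2 h1)
      (fun i hb => hωB i (Finset.mem_filter.mpr ⟨Finset.mem_univ _, hb⟩))
  have hcard : N ≤ (G.card : ℝ) + (∑ i, ((B i).card : ℝ)) + (L.card : ℝ) := by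
    have h1 := Finset.card_le_card hcover
    rw [Finset.card_univ] at h1
    have h2 := h1.trans (Finset.card_union_le _ _)
    have h3 : (G ∪ Finset.univ.biUnion B).card ≤ G.card + ∑ i, (B i).card :=
      (Finset.card_union_le _ _).trans (Nat.add_le_add_left Finset.card_biUnion_le _)
    have h4 : Fintype.card (Om H F m) ≤ G.card + ∑ i, (B i).card + L.card :=
      h2.trans (Nat.add_le_add_right h3 _)
    rw [hN]
    exact_mod_cast h4
  have hBsum : ∑ i, ((B i).card : ℝ) ≤ m * (2 / (Fintype.card F : ℝ) * N) := by
    refine (Finset.sum_le_sum fun i _ => hBc i).trans (le_of_eq ?_)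
    simp
  have hN0 : 0 ≤ N := by rw [hN]; positivity
  have := mul_le_mul_of_nonneg_right hpow hN0
  rw [sub_mul]
  nlinarith
end
end
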